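/- Let A₁, A₂, A₃, A₄, A₅ be pairwise distinct, pairwise noncrossing nonempty compact convex subsets of ℝ² in general position, with no two tangent and no line tangent to three of them. Then there exist five points x₁, …, x₅ ∈ ℝ², no three of which are collinear, such that for all indices i < j < k: if det(x_j − x_i, x_k − x_i) > 0 then the ordered triple (A_i, A_j, A_k) is counterclockwise oriented, and if det(x_j − x_i, x_k − x_i) < 0 then (A_i, A_j, A_k) is clockwise oriented. -/

import Mathlib

open Set

noncomputable section

/-- The Euclidean plane. -/
abbrev Plane : Type := EuclideanSpace ℝ (Fin 2)

/-- The 2×2 determinant of two plane vectors. -/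
def det2 (u v : Plane) : ℝ := u 0 * v 1 - u 1 * v 0

/-- A convex body in the plane: nonempty, compact and convex. -/
def ConvexBody2 (A : Set Plane) : Prop := A.Nonempty ∧ IsCompact A ∧ Convex ℝ A

/-- A family of sets is in convex position if removing any member changes the
convex hull of the union of the family. -/
def ConvexPos (F : Set (Set Plane)) : Prop :=
  ∀ A ∈ F, convexHull ℝ (⋃₀ F) ≠ convexHull ℝ (⋃₀ (F \ {A}))

/-- A family is in general position if every 3-element subfamily is in convex position. -/
def GenPos (F : Set (Set Plane)) : Prop :=
  ∀ G ⊆ F, G.ncard = 3 → ConvexPos G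

/-- Two sets are noncrossing if both set differences are connected. -/
def NoncrossingPair (A B : Set Plane) : Prop := IsConnected (A \ B) ∧ IsConnected (B \ A)

/-- Two convex bodies are tangent if they intersect but their interiors are disjoint. -/
def TangentBodies (A B : Set Plane) : Prop :=
  (A ∩ B).Nonempty ∧ interior A ∩ interior B = ∅

/-- The line `{x | f x = c}` (for `f ≠ 0`) is tangent to `A`:
it meets `A` and `A` lies in one of the two closed half-planes it bounds. -/
def TangentLineTo (f : Plane →ₗ[ℝ] ℝ) (c : ℝ) (A : Set Plane) : Prop :=
  (∃ x ∈ A, f x = c) ∧ ((∀ x ∈ A, f x ≤ c) ∨ (∀ x ∈ A, c ≤ f x))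

/-- No line is tangent to three distinct members of the family. -/
def NoTripleTangentLine (F : Set (Set Plane)) : Prop :=
  ∀ f : Plane →ₗ[ℝ] ℝ, f ≠ 0 → ∀ c : ℝ, ∀ A ∈ F, ∀ B ∈ F, ∀ C ∈ F,
    A ≠ B → B ≠ C → A ≠ C →
    ¬ (TangentLineTo f c A ∧ TangentLineTo f c B ∧ TangentLineTo f c C)

/-- The ordered triple `(A₁, A₂, A₃)` is counterclockwise oriented. -/
def CCWOriented (A₁ A₂ A₃ : Set Plane) : Prop :=
  ∃ a₁ ∈ A₁ ∩ frontier (convexHull ℝ (A₁ ∪ A₂ ∪ A₃)),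
  ∃ a₂ ∈ A₂ ∩ frontier (convexHull ℝ (A₁ ∪ A₂ ∪ A₃)),
  ∃ a₃ ∈ A₃ ∩ frontier (convexHull ℝ (A₁ ∪ A₂ ∪ A₃)),
    0 < det2 (a₂ - a₁) (a₃ - a₁)

/-- The ordered triple `(A₁, A₂, A₃)` is clockwise oriented. -/
def CWOriented (A₁ A₂ A₃ : Set Plane) : Prop :=
  ∃ a₁ ∈ A₁ ∩ frontier (convexHull ℝ (A₁ ∪ A₂ ∪ A₃)),
  ∃ a₂ ∈ A₂ ∩ frontier (convexHull ℝ (A₁ ∪ A₂ ∪ A₃)),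
  ∃ a₃ ∈ A₃ ∩ frontier (convexHull ℝ (A₁ ∪ A₂ ∪ A₃)),
    det2 (a₂ - a₁) (a₃ - a₁) < 0

/-- An affine line in the plane: an affine subspace with 1-dimensional direction. -/
def IsLine (L : AffineSubspace ℝ Plane) : Prop := Module.finrank ℝ L.direction = 1

/-- `L` is a transversal line of the family `F`. -/
def TransversalLine (L : AffineSubspace ℝ Plane) (F : Set (Set Plane)) : Prop :=
  IsLine L ∧ ∀ A ∈ F, ((L : Set Plane) ∩ A).Nonempty

section CircularOrders

/-- A linearly ordered family of strict total orders without interleaving. -/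
structure LSys {ι X : Type*} [LinearOrder X] (L : X → ι → ι → Prop) : Prop where
  tot : ∀ x i j, i ≠ j → L x i j ∨ L x j i
  asym : ∀ x i j, L x i j → ¬ L x j i
  tr : ∀ x i j k, L x i j → L x j k → L x i k
  nx : ∀ i j x y z w, x < y → y < z → z < w → L x i j → L y j i → L z i j → L w j i → False
  gp : ∀ i j k, i ≠ j → j ≠ k → i ≠ k → ∃ x, L x i j ∧ L x i k

def CycLt {X : Type*} [LinearOrder X] (x y z : X) : Prop :=
  (x < y ∧ y < z) ∨ (y < z ∧ z < x) ∨ (z < x ∧ x < y)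

/-- `i, j, k` appear on top, within the triple, in this cyclic order. -/
def AlX {ι X : Type*} [LinearOrder X] (L : X → ι → ι → Prop) (i j k : ι) : Prop :=
  ∃ x y z, CycLt x y z ∧ (L x i j ∧ L x i k) ∧ (L y j i ∧ L y j k) ∧ (L z k i ∧ L z k j)

variable {ι X : Type*} [LinearOrder X] {L : X → ι → ι → Prop}

theorem LSys.ne_of (S : LSys L) {x y : X} {i j : ι} (h : L x i j) (h' : L y j i) : x ≠ y := by
  rintro rfl; exact S.asym _ _ _ h h'

/-- Forced orientation, usable form. -/
theorem LSys.forced (S : LSys L) {t b a : ι} (h : ¬ AlX L t b a) {x y z : X}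
    (hx : L x t b ∧ L x t a) (hy : L y b t ∧ L y b a) (hz : L z a t ∧ L z a b) : CycLt x z y := by
  have h1 := S.ne_of hx.1 hy.1
  have h2 := S.ne_of hx.2 hz.1
  have h3 := S.ne_of hy.2 hz.2
  have : ¬ CycLt x y z := fun hc => h ⟨x, y, z, hc, hx, hy, hz⟩
  unfold CycLt at *
  grind

theorem LSys.flip (S : LSys L) {x : X} {i j : ι} (hij : i ≠ j) (h : ¬ L x i j) : L x j i :=
  (S.tot x i j hij).resolve_left h

/-- two of the three points above -/
theorem LSys.r4_two (S : LSys L) {a b c t : ι} (hab : a ≠ b) (hac : a ≠ c) (hbc : b ≠ c)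
    (hta : t ≠ a) (htb : t ≠ b) (htc : t ≠ c)
    (h1 : ¬ AlX L t b a) (h2 : ¬ AlX L t c b)
    {α γ β : X} (hc : CycLt α γ β)
    (ha : L α a b ∧ L α a c) (hb : L β b a ∧ L β b c) (hcc : L γ c a ∧ L γ c b)
    (ta : L α t a) (tc : L γ t c) (tb : L β b t) : False := by
  obtain ⟨a', a1, a2⟩ := S.gp a t b hta.symm htb hab
  obtain ⟨c', c1, c2⟩ := S.gp c t b htc.symm htb hbc.symm
  have tb' : ∀ a', L a' a t → L a' a b → CycLt γ a' β := fun a' a1 a2 =>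
    S.forced h1 (x := γ) (y := β) (z := a')
    ⟨S.tr _ _ _ _ tc hcc.2, S.tr _ _ _ _ tc hcc.1⟩ ⟨tb, hb.1⟩ ⟨a1, a2⟩
  have tc' : ∀ c', L c' c t → L c' c b → CycLt α β c' := fun c' c1 c2 =>
    S.forced h2 (x := α) (y := c') (z := β)
    ⟨S.tr _ _ _ _ ta ha.2, S.tr _ _ _ _ ta ha.1⟩ ⟨c1, c2⟩ ⟨tb, hb.2⟩
  have e1 := tb' a' a1 a2
  have e2 := tc' c' c1 c2
  have l1 : L a' a c := by
    by_contra h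
    have h := S.flip hac h
    have := tc' a' (S.tr _ _ _ _ h a1) (S.tr _ _ _ _ h a2)
    unfold CycLt at *; grind
  have l2 : L c' c a := by
    by_contra h
    have h := S.flip hac.symm h
    have := tb' c' (S.tr _ _ _ _ h c1) (S.tr _ _ _ _ h c2)
    unfold CycLt at *; grind
  have n1 := S.nx a c
  have n2 := S.nx c a
  have : ¬ (α < γ ∧ γ < a' ∧ a' < c') := fun h => n1 _ _ _ _ h.1 h.2.1 h.2.2 ha.2 hcc.1 l1 l2
  have : ¬ (γ < a' ∧ a' < c' ∧ c' < α) := fun h => n2 _ _ _ _ h.1 h.2.1 h.2.2 hcc.1 l1 l2 ha.2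
  have : ¬ (a' < c' ∧ c' < α ∧ α < γ) := fun h => n1 _ _ _ _ h.1 h.2.1 h.2.2 l1 l2 ha.2 hcc.1
  have : ¬ (c' < α ∧ α < γ ∧ γ < a') := fun h => n2 _ _ _ _ h.1 h.2.1 h.2.2 l2 ha.2 hcc.1 l1
  unfold CycLt at *; grind

theorem LSys.r4_zero (S : LSys L) {a b c t : ι} (hab : a ≠ b) (hac : a ≠ c) (hbc : b ≠ c)
    (hta : t ≠ a) (htb : t ≠ b) (htc : t ≠ c)
    (h1 : ¬ AlX L t b a) (h2 : ¬ AlX L t c b) (h3 : ¬ AlX L t a c)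
    {α γ β : X} (hc : CycLt α γ β)
    (ha : L α a b ∧ L α a c) (hb : L β b a ∧ L β b c) (hcc : L γ c a ∧ L γ c b)
    (ta : L α a t) (tc : L γ c t) (tb : L β b t) : False := by
  have w1 : ∀ τ, L τ t a → L τ t b → CycLt τ α β := fun τ x y =>
    S.forced h1 ⟨y, x⟩ ⟨tb, hb.1⟩ ⟨ta, ha.1⟩
  have w2 : ∀ τ, L τ t b → L τ t c → CycLt τ β γ := fun τ x y =>
    S.forced h2 ⟨y, x⟩ ⟨tc, hcc.2⟩ ⟨tb, hb.2⟩
  have w3 : ∀ τ, L τ t c → L τ t a → CycLt τ γ α := fun τ x y =>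
    S.forced h3 ⟨y, x⟩ ⟨ta, ha.2⟩ ⟨tc, hcc.1⟩
  obtain ⟨τ1, x1, y1⟩ := S.gp t a b hta hab htb
  obtain ⟨τ2, x2, y2⟩ := S.gp t b c htb hbc htc
  obtain ⟨τ3, x3, y3⟩ := S.gp t c a htc hac.symm hta
  have e1 := w1 _ x1 y1
  have e2 := w2 _ x2 y2
  have e3 := w3 _ x3 y3
  have l2 : L τ2 a t := by
    by_contra h
    have := w1 _ (S.flip hta.symm h) x2
    unfold CycLt at *; grind
  have l3 : L τ3 b t := by
    by_contra h
    have := w1 _ y3 (S.flip htb.symm h)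
    unfold CycLt at *; grind
  have l2' := S.tr _ _ _ _ l2 x2
  have l3' := S.tr _ _ _ _ l3 y3
  -- α (a > b), τ3 (b > a), τ2 (a > b), β (b > a)
  have n1 := S.nx a b
  have n2 := S.nx b a
  have : ¬ (α < τ3 ∧ τ3 < τ2 ∧ τ2 < β) := fun h => n1 _ _ _ _ h.1 h.2.1 h.2.2 ha.1 l3' l2' hb.1
  have : ¬ (τ3 < τ2 ∧ τ2 < β ∧ β < α) := fun h => n2 _ _ _ _ h.1 h.2.1 h.2.2 l3' l2' hb.1 ha.1
  have : ¬ (τ2 < β ∧ β < α ∧ α < τ3) := fun h => n1 _ _ _ _ h.1 h.2.1 h.2.2 l2' hb.1 ha.1 l3'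
  have : ¬ (β < α ∧ α < τ3 ∧ τ3 < τ2) := fun h => n2 _ _ _ _ h.1 h.2.1 h.2.2 hb.1 ha.1 l3' l2'
  unfold CycLt at *; grind


theorem LSys.r4_top (S : LSys L) {a b c t : ι} (hab : a ≠ b) (hac : a ≠ c) (hbc : b ≠ c)
    (hta : t ≠ a) (htb : t ≠ b) (htc : t ≠ c)
    (h1 : ¬ AlX L t b a) (h2 : ¬ AlX L t c b) (h3 : ¬ AlX L t a c)
    {τ : X} (ta : L τ t a) (tb : L τ t b) (tc : L τ t c) : False := by
  have w1 : ∀ p q, L p a t → L p a b → L q b t → L q b a → CycLt τ p q :=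
    fun p q x y z w => S.forced h1 ⟨tb, ta⟩ ⟨z, w⟩ ⟨x, y⟩
  have w2 : ∀ p q, L p b t → L p b c → L q c t → L q c b → CycLt τ p q :=
    fun p q x y z w => S.forced h2 ⟨tc, tb⟩ ⟨z, w⟩ ⟨x, y⟩
  have w3 : ∀ p q, L p c t → L p c a → L q a t → L q a c → CycLt τ p q :=
    fun p q x y z w => S.forced h3 ⟨ta, tc⟩ ⟨z, w⟩ ⟨x, y⟩
  have vis : ∀ a b c : ι, a ≠ b → a ≠ c → b ≠ c → t ≠ a → t ≠ b → t ≠ c →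
      (∀ p q, L p b t → L p b c → L q c t → L q c b → CycLt τ p q) →
      (∀ p q, L p c t → L p c a → L q a t → L q a c → CycLt τ p q) →
      (∀ p q, L p a t → L p a b → L q b t → L q b a → CycLt τ p q) →
      ∃ p, L p a t ∧ L p a b ∧ L p a c := by
    intro a b c hab hac hbc hta htb htc w2 w3 w1
    obtain ⟨p, p1, p2⟩ := S.gp a t b hta.symm htb hab
    obtain ⟨q, q1, q2⟩ := S.gp a t c hta.symm htc hac
    by_cases hp : L p a c
    · exact ⟨p, p1, p2, hp⟩
    by_cases hq : L q a b
    · exact ⟨q, q1, hq, q2⟩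
    have hp := S.flip hac hp
    have hq := S.flip hab hq
    have x1 := w2 q p (S.tr _ _ _ _ hq q1) (S.tr _ _ _ _ hq q2) (S.tr _ _ _ _ hp p1)
      (S.tr _ _ _ _ hp p2)
    have x2 := w3 p q (S.tr _ _ _ _ hp p1) hp q1 q2
    exfalso
    unfold CycLt at *; grind
  obtain ⟨p, p1, p2, p3⟩ := vis a b c hab hac hbc hta htb htc w2 w3 w1
  obtain ⟨q, q1, q2, q3⟩ := vis b c a hbc hab.symm hac.symm htb htc hta w3 w1 w2
  obtain ⟨r, r1, r2, r3⟩ := vis c a b hac.symm hbc.symm hab htc hta htb w1 w2 w3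
  have x1 := w1 p q p1 p2 q1 q3
  have x2 := w2 q r q1 q2 r1 r3
  have x3 := w3 r p r1 r2 p1 p3
  unfold CycLt at *; grind

/-- interiority -/
theorem LSys.r4 (S : LSys L) {a b c t : ι} (hab : a ≠ b) (hac : a ≠ c) (hbc : b ≠ c)
    (hta : t ≠ a) (htb : t ≠ b) (htc : t ≠ c)
    (h1 : ¬ AlX L t b a) (h2 : ¬ AlX L t c b) (h3 : ¬ AlX L t a c) : ¬ AlX L a c b := by
  rintro ⟨α, γ, β, hc, ha, hcc, hb⟩
  have top := fun τ => S.r4_top hab hac hbc hta htb htc h1 h2 h3 (τ := τ)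
  rcases S.tot α t a hta with ta | ta
  · exact top α ta (S.tr _ _ _ _ ta ha.2) (S.tr _ _ _ _ ta ha.1)
  rcases S.tot β t b htb with tb | tb
  · exact top β (S.tr _ _ _ _ tb hb.1) tb (S.tr _ _ _ _ tb hb.2)
  rcases S.tot γ t c htc with tc | tc
  · exact top γ (S.tr _ _ _ _ tc hcc.1) (S.tr _ _ _ _ tc hcc.2) tc
  exact S.r4_zero hab hac hbc hta htb htc h1 h2 h3 hc ha.symm hb hcc ta tc tb

theorem LSys.rot (S : LSys L) {i j x y z w} (h1 : CycLt x y z) (h2 : CycLt z w x)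
    (a : L x i j) (b : L y j i) (c : L z i j) (d : L w j i) : False := by
  have n1 := S.nx i j
  have n2 := S.nx j i
  have : ¬ (x < y ∧ y < z ∧ z < w) := fun h => n1 _ _ _ _ h.1 h.2.1 h.2.2 a b c d
  have : ¬ (y < z ∧ z < w ∧ w < x) := fun h => n2 _ _ _ _ h.1 h.2.1 h.2.2 b c d a
  have : ¬ (z < w ∧ w < x ∧ x < y) := fun h => n1 _ _ _ _ h.1 h.2.1 h.2.2 c d a b
  have : ¬ (w < x ∧ x < y ∧ y < z) := fun h => n2 _ _ _ _ h.1 h.2.1 h.2.2 d a b c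
  unfold CycLt at *; grind

/-- separated tops contradict being forced -/
theorem LSys.nosep (S : LSys L) {t a b} (hta : t ≠ a) (htb : t ≠ b) (hab : a ≠ b)
    (h : ¬ AlX L t b a) {τ₁ τ₂ p q : X}
    (t1 : L τ₁ t a ∧ L τ₁ t b) (t2 : L τ₂ t a ∧ L τ₂ t b) (hp : L p a t) (hq : L q b t)
    (c1 : CycLt τ₁ p τ₂) (c2 : CycLt τ₂ q τ₁) : False := by
  have hp' : L p t b := by
    by_contra h'
    exact S.rot c1 c2 t1.2 (S.flip htb h') t2.2 hq
  have hq' : L q t a := by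
    by_contra h'
    exact S.rot c1 c2 t1.1 hp t2.1 (S.flip hta h')
  have x1 := S.forced h t1.symm ⟨hq, S.tr _ _ _ _ hq hq'⟩ ⟨hp, S.tr _ _ _ _ hp hp'⟩
  have x2 := S.forced h t2.symm ⟨hq, S.tr _ _ _ _ hq hq'⟩ ⟨hp, S.tr _ _ _ _ hp hp'⟩
  unfold CycLt at *; grind

/-- merging two tops -/
theorem LSys.merge (S : LSys L) {t s y} (hts : t ≠ s) (hty : t ≠ y) (hsy : s ≠ y)
    (h : ¬ AlX L t y s) {τ τ' σ : X} (h1 : L τ t s) (h2 : L τ' t s ∧ L τ' t y) (hσ : L σ s t)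
    (hc : CycLt τ' τ σ) : L τ t y := by
  by_contra h'
  have h' := S.flip hty h'
  obtain ⟨σ', s1, s2⟩ := S.gp s t y hts.symm hty hsy
  have := S.forced h h2.symm ⟨h', S.tr _ _ _ _ h' h1⟩ ⟨s1, s2⟩
  refine S.rot (x := τ') (y := σ') (z := τ) (w := σ) this ?_ h2.1 s1 h1 hσ
  unfold CycLt at *; grind

/-- transitivity, with a common point where `t` is on top -/
theorem LSys.r5_top (S : LSys L) {t s p q r} (hts : t ≠ s) (htp : t ≠ p) (htq : t ≠ q)
    (htr : t ≠ r) (hsp : s ≠ p) (hsr : s ≠ r) (hpq : p ≠ q) (hpr : p ≠ r) (hqr : q ≠ r)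
    (hp : ¬ AlX L t p s) (hr : ¬ AlX L t r s) (h1 : ¬ AlX L t q p) (h2 : ¬ AlX L t r q)
    {m : X} (ms : L m t s) (mp : L m t p) (mq : L m t q) (mr : L m t r) : ¬ AlX L t r p := by
  rintro ⟨τ, r1, p1, hc, hτ, hr1, hp1⟩
  have w1 : ∀ x y, L x p t → L x p q → L y q t → L y q p → CycLt m x y :=
    fun _ _ x y z w => S.forced h1 ⟨mq, mp⟩ ⟨z, w⟩ ⟨x, y⟩
  have w2 : ∀ x y, L x q t → L x q r → L y r t → L y r q → CycLt m x y :=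
    fun _ _ x y z w => S.forced h2 ⟨mr, mq⟩ ⟨z, w⟩ ⟨x, y⟩
  have m1 := S.ne_of mr hr1.1
  have m2 := S.ne_of mp hp1.1
  have m3 := S.ne_of hr1.2 hp1.2
  by_cases hA : CycLt m r1 p1
  · rcases S.tot r1 q r hqr with hq | hq
    · obtain ⟨p2, a1, a2⟩ := S.gp p t q htp.symm htq hpq
      obtain ⟨r2, b1, b2⟩ := S.gp r t q htr.symm htq hqr.symm
      have z1 := w1 p2 r1 a1 a2 (S.tr _ _ _ _ hq hr1.1) (S.tr _ _ _ _ hq hr1.2)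
      have y1 : L p1 q p := by
        by_contra h
        have := w1 p1 r1 hp1.1 (S.flip hpq.symm h) (S.tr _ _ _ _ hq hr1.1) (S.tr _ _ _ _ hq hr1.2)
        unfold CycLt at *; grind
      have z2 := w2 p1 r2 (S.tr _ _ _ _ y1 hp1.1) (S.tr _ _ _ _ y1 hp1.2) b1 b2
      have y2 : L p2 p r := by
        by_contra h
        have h := S.flip hpr h
        have := w2 p1 p2 (S.tr _ _ _ _ y1 hp1.1) (S.tr _ _ _ _ y1 hp1.2)
          (S.tr _ _ _ _ h a1) (S.tr _ _ _ _ h a2)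
        unfold CycLt at *; grind
      have y3 : L r2 r p := by
        by_contra h
        have h := S.flip hpr.symm h
        have := w1 r2 r1 (S.tr _ _ _ _ h b1) (S.tr _ _ _ _ h b2) (S.tr _ _ _ _ hq hr1.1)
          (S.tr _ _ _ _ hq hr1.2)
        unfold CycLt at *; grind
      refine S.rot (x := p2) (y := r1) (z := p1) (w := r2) ?_ ?_ y2 hr1.2 hp1.2 y3 <;>
        (unfold CycLt at *; grind)
    · obtain ⟨q2, a1, a2⟩ := S.gp q t r htq.symm htr hqr
      obtain ⟨q3, b1, b2⟩ := S.gp q t p htq.symm htp hpq.symm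
      have z1 := w2 q2 r1 a1 a2 hr1.1 hq
      have y1 : L p1 p q := by
        by_contra h
        have h := S.flip hpq h
        have := w2 p1 r1 (S.tr _ _ _ _ h hp1.1) (S.tr _ _ _ _ h hp1.2) hr1.1 hq
        unfold CycLt at *; grind
      have z2 := w1 p1 q3 hp1.1 y1 b1 b2
      have y2 : L q2 p q := by
        by_contra h
        have := w1 p1 q2 hp1.1 y1 a1 (S.flip hpq h)
        unfold CycLt at *; grind
      have y3 : L q3 r q := by
        by_contra h
        have := w2 q3 r1 b1 (S.flip hqr.symm h) hr1.1 hq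
        unfold CycLt at *; grind
      refine S.rot (x := q2) (y := r1) (z := p1) (w := q3) ?_ ?_ (S.tr _ _ _ _ y2 a2) hr1.2 hp1.2
        (S.tr _ _ _ _ y3 b2) <;>
        (unfold CycLt at *; grind)
  · -- m, p1, τ, r1
    have n1 := S.ne_of hτ.1 hr1.1
    have n2 := S.ne_of hτ.2 hp1.1
    have c1 : CycLt m p1 τ := by unfold CycLt at *; grind
    have c2 : CycLt τ r1 m := by unfold CycLt at *; grind
    rcases S.tot τ t s hts with hs | hs
    · obtain ⟨σ, s1, s2⟩ := S.gp s t p hts.symm htp hsp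
      have k1 := S.ne_of hs s1
      have k2 := S.ne_of ms s1
      by_cases hh : CycLt m σ τ
      · exact S.nosep hts htr hsr hr ⟨ms, mr⟩ ⟨hs, hτ.1⟩ s1 hr1.1 hh c2
      · have hh : CycLt τ σ m := by unfold CycLt at *; grind
        exact S.nosep hts htp hsp hp ⟨hs, hτ.2⟩ ⟨ms, mp⟩ s1 hp1.1 hh c1
    · obtain ⟨p', x1, x2⟩ := S.gp p t s htp.symm hts hsp.symm
      have := S.forced hp ⟨mp, ms⟩ ⟨x1, x2⟩ ⟨hs, S.tr _ _ _ _ hs hτ.2⟩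
      refine S.rot (x := m) (y := p1) (z := τ) (w := p') c1 ?_ mp hp1.1 hτ.2 x1
      unfold CycLt at *; grind

/-- transitivity -/
theorem LSys.r5 (S : LSys L) {t s p q r} (hts : t ≠ s) (htp : t ≠ p) (htq : t ≠ q)
    (htr : t ≠ r) (hsp : s ≠ p) (hsq : s ≠ q) (hsr : s ≠ r) (hpq : p ≠ q) (hpr : p ≠ r)
    (hqr : q ≠ r)
    (hp : ¬ AlX L t p s) (hq : ¬ AlX L t q s) (hr : ¬ AlX L t r s) (h1 : ¬ AlX L t q p)
    (h2 : ¬ AlX L t r q) : ¬ AlX L t r p := by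
  obtain ⟨σ, s1, -⟩ := S.gp s t p hts.symm htp hsp
  obtain ⟨a, a1, a2⟩ := S.gp t s p hts hsp htp
  obtain ⟨b, b1, b2⟩ := S.gp t s q hts hsq htq
  obtain ⟨c, c1, c2⟩ := S.gp t s r hts hsr htr
  have top := fun m => S.r5_top hts htp htq htr hsp hsr hpq hpr hqr hp hr h1 h2 (m := m)
  have m1 : ∀ τ, L τ t s → τ = a ∨ CycLt a τ σ → L τ t p := by
    rintro τ h (rfl | h')
    · exact a2
    · exact S.merge hts htp hsp hp h ⟨a1, a2⟩ s1 h'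
  have m2 : ∀ τ, L τ t s → τ = b ∨ CycLt b τ σ → L τ t q := by
    rintro τ h (rfl | h')
    · exact b2
    · exact S.merge hts htq hsq hq h ⟨b1, b2⟩ s1 h'
  have m3 : ∀ τ, L τ t s → τ = c ∨ CycLt c τ σ → L τ t r := by
    rintro τ h (rfl | h')
    · exact c2
    · exact S.merge hts htr hsr hr h ⟨c1, c2⟩ s1 h'
  have e1 := S.ne_of a1 s1
  have e2 := S.ne_of b1 s1
  have e3 := S.ne_of c1 s1
  have : (( b = a ∨ CycLt b a σ) ∧ (c = a ∨ CycLt c a σ)) ∨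
      ((a = b ∨ CycLt a b σ) ∧ (c = b ∨ CycLt c b σ)) ∨
      ((a = c ∨ CycLt a c σ) ∧ (b = c ∨ CycLt b c σ)) := by
    unfold CycLt; grind
  rcases this with ⟨x, y⟩ | ⟨x, y⟩ | ⟨x, y⟩
  · exact top a a1 a2 (m2 a a1 (x.imp Eq.symm id)) (m3 a a1 (y.imp Eq.symm id))
  · exact top b b1 (m1 b b1 (x.imp Eq.symm id)) b2 (m3 b b1 (y.imp Eq.symm id))
  · exact top c c1 (m1 c c1 (x.imp Eq.symm id)) (m2 c c1 (y.imp Eq.symm id)) c2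

/-- the reversed system -/
theorem LSys.rev (S : LSys L) : LSys (X := Xᵒᵈ) (fun x => L (OrderDual.ofDual x)) where
  tot x := S.tot _
  asym x := S.asym _
  tr x := S.tr _
  nx i j x y z w h1 h2 h3 a b c d := S.nx j i _ _ _ _
    (show OrderDual.ofDual w < OrderDual.ofDual z from h3)
    (show OrderDual.ofDual z < OrderDual.ofDual y from h2)
    (show OrderDual.ofDual y < OrderDual.ofDual x from h1) d c b a
  gp i j k h1 h2 h3 := (S.gp i j k h1 h2 h3)

theorem alX_rev {i j k : ι} :
    AlX (X := Xᵒᵈ) (fun x => L (OrderDual.ofDual x)) i j k ↔ AlX L i k j := by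
  have key : ∀ x y z : X, CycLt (X := Xᵒᵈ) (OrderDual.toDual x) (OrderDual.toDual y)
      (OrderDual.toDual z) ↔ CycLt x z y := by
    intro x y z
    simp only [CycLt, OrderDual.toDual_lt_toDual]
    tauto
  constructor
  · rintro ⟨x, y, z, h, a, b, c⟩
    exact ⟨OrderDual.ofDual x, OrderDual.ofDual z, OrderDual.ofDual y, (key _ _ _).1 h,
      a.symm, c, b⟩
  · rintro ⟨x, y, z, h, a, b, c⟩
    exact ⟨OrderDual.toDual x, OrderDual.toDual z, OrderDual.toDual y, (key _ _ _).2 h,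
      a.symm, c, b⟩

theorem alX_cyc {i j k : ι} (h : AlX L i j k) : AlX L j k i := by
  obtain ⟨x, y, z, h, a, b, c⟩ := h
  refine ⟨y, z, x, ?_, b.symm, c.symm, a⟩
  unfold CycLt at *; tauto

theorem LSys.al_or (S : LSys L) {i j k : ι} (h1 : i ≠ j) (h2 : j ≠ k) (h3 : i ≠ k) :
    AlX L i j k ∨ AlX L i k j := by
  obtain ⟨x, x1, x2⟩ := S.gp i j k h1 h2 h3
  obtain ⟨y, y1, y2⟩ := S.gp j i k h1.symm h3 h2
  obtain ⟨z, z1, z2⟩ := S.gp k i j h3.symm h1 h2.symm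
  by_contra h
  push Not at h
  have := S.forced h.1 ⟨x1, x2⟩ ⟨y1, y2⟩ ⟨z1, z2⟩
  exact h.2 ⟨x, z, y, this, ⟨x2, x1⟩, ⟨z1, z2⟩, ⟨y1, y2⟩⟩

/-- dual transitivity -/
theorem LSys.r5' (S : LSys L) {t s p q r} (hts : t ≠ s) (htp : t ≠ p) (htq : t ≠ q)
    (htr : t ≠ r) (hsp : s ≠ p) (hsq : s ≠ q) (hsr : s ≠ r) (hpq : p ≠ q) (hpr : p ≠ r)
    (hqr : q ≠ r)
    (hp : ¬ AlX L t s p) (hq : ¬ AlX L t s q) (hr : ¬ AlX L t s r) (h1 : ¬ AlX L t q p)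
    (h2 : ¬ AlX L t r q) : ¬ AlX L t r p := by
  have := S.rev.r5 hts htr htq htp hsr hsq hsp hqr.symm hpr.symm hpq.symm
  simp only [alX_rev] at this
  exact this hr hq hp h2 h1

end CircularOrders


section FiniteStep

def cfgX (n : Nat) : Int :=
  match n with
  | 0 => 0
  | 1 => 4
  | 2 => 6
  | 3 => 2
  | 4 => -2
  | 5 => 0
  | 6 => 6
  | 7 => 6
  | 8 => 0
  | 9 => 4
  | 10 => 0
  | 11 => 12
  | 12 => 6
  | 13 => 5
  | _ => 7

def cfgY (n : Nat) : Int :=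
  match n with
  | 0 => 0
  | 1 => 0
  | 2 => 3
  | 3 => 6
  | 4 => 3
  | 5 => 0
  | 6 => 0
  | 7 => 6
  | 8 => 6
  | 9 => 3
  | 10 => 0
  | 11 => 0
  | 12 => 12
  | 13 => 3
  | _ => 4

/-- which of the points of the configuration carries label `i` -/
def codePt (c i : Nat) : Nat := c / 3125 * 5 + c / 5 ^ i % 5

def codeDet (c i j k : Nat) : Int :=
  (cfgX (codePt c j) - cfgX (codePt c i)) * (cfgY (codePt c k) - cfgY (codePt c i)) -
  (cfgY (codePt c j) - cfgY (codePt c i)) * (cfgX (codePt c k) - cfgX (codePt c i))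

def triI (n : Nat) : Nat := match n with
  | 0 => 0 | 1 => 0 | 2 => 0 | 3 => 0 | 4 => 0 | 5 => 0 | 6 => 1 | 7 => 1 | 8 => 1 | _ => 2
def triJ (n : Nat) : Nat := match n with
  | 0 => 1 | 1 => 1 | 2 => 1 | 3 => 2 | 4 => 2 | 5 => 3 | 6 => 2 | 7 => 2 | 8 => 3 | _ => 3
def triK (n : Nat) : Nat := match n with
  | 0 => 2 | 1 => 3 | 2 => 4 | 3 => 3 | 4 => 4 | 5 => 4 | 6 => 3 | 7 => 4 | 8 => 4 | _ => 4

/-- number of the sorted triple -/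
def triN (i j k : Nat) : Nat :=
  bif i == 0 then (bif j == 1 then k - 2 else bif j == 2 then k else 5)
  else bif i == 1 then (bif j == 2 then k + 3 else 8) else 9

/-- number of the literal `F i j k` -/
def litBit (i j k : Nat) : Nat :=
  bif i.blt j then
    (bif j.blt k then 2 * triN i j k else bif i.blt k then 2 * triN i k j + 1
      else 2 * triN k i j)
  else (bif i.blt k then 2 * triN j i k + 1 else bif j.blt k then 2 * triN j k i
    else 2 * triN k j i + 1)

/-- the triple of a literal -/
def litTri (b : Nat) : Nat × Nat × Nat :=
  bif b % 2 == 0 then (triI (b / 2), triJ (b / 2), triK (b / 2))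
  else (triI (b / 2), triK (b / 2), triJ (b / 2))

theorem litTri_litBit_fin : ∀ i j k : Fin 5, i = j ∨ j = k ∨ i = k ∨
    litTri (litBit i.1 j.1 k.1) = (i.1, j.1, k.1) ∨
    litTri (litBit i.1 j.1 k.1) = (j.1, k.1, i.1) ∨
    litTri (litBit i.1 j.1 k.1) = (k.1, i.1, j.1) := by
  decide +kernel

theorem litTri_litBit (i : Nat) (hi : i < 5) (j : Nat) (hj : j < 5) (k : Nat) (hk : k < 5)
    (h1 : i ≠ j) (h2 : j ≠ k) (h3 : i ≠ k) :
    litTri (litBit i j k) = (i, j, k) ∨ litTri (litBit i j k) = (j, k, i) ∨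
    litTri (litBit i j k) = (k, i, j) := by
  have := litTri_litBit_fin ⟨i, hi⟩ ⟨j, hj⟩ ⟨k, hk⟩
  simpa [Fin.ext_iff, h1, h2, h3] using this

def lm (i j k : Nat) : Nat := 2 ^ litBit i j k

/-- a deduction rule: `0` interiority, `1` transitivity, `2` dual transitivity -/
def mkRule (y t s p q r : Nat) : Nat × Nat :=
  bif y == 0 then (lm t s p ||| (lm t p q ||| lm t q s), lm s p q)
  else bif y == 1 then
    (lm t s p ||| (lm t s q ||| (lm t s r ||| (lm t p q ||| lm t q r))), lm t p r)
  else (lm t p s ||| (lm t q s ||| (lm t r s ||| (lm t p q ||| lm t q r))), lm t p r)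

def distinct5 (a b d e f : Nat) : Bool :=
  !(a == b || a == d || a == e || a == f || b == d || b == e || b == f || d == e || d == f
      || e == f)

def applyRule (c S : Nat) : Nat :=
  bif distinct5 (c % 5) (c / 5 % 5) (c / 25 % 5) (c / 125 % 5) (c / 625 % 5) then
    bif Nat.beq (S &&& (mkRule (c / 3125) (c % 5) (c / 5 % 5) (c / 25 % 5) (c / 125 % 5)
      (c / 625 % 5)).1) (mkRule (c / 3125) (c % 5) (c / 5 % 5) (c / 25 % 5) (c / 125 % 5)
      (c / 625 % 5)).1
    then S ||| (mkRule (c / 3125) (c % 5) (c / 5 % 5) (c / 25 % 5) (c / 125 % 5)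
      (c / 625 % 5)).2 else S
  else S

/-- A decision tree. -/
inductive Cert : Type
  /-- derive a contradiction by rules, ending in complementary literals number `n` -/
  | l (rs : List Nat) (n : Nat) : Cert
  /-- derive a contradiction by rules, ending in a derived literal known to be false -/
  | m (rs : List Nat) (b : Nat) : Cert
  /-- the order type with this code is compatible -/
  | d (code : Nat) : Cert
  /-- split according to whether literal `b` holds -/
  | s (b : Nat) (yes no : Cert) : Cert

def runRules : List Nat → Nat → Nat
  | [], S => S
  | r :: l, S => runRules l (applyRule r S)

def doneOk (code N : Nat) : Nat → Bool
  | 0 => true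
  | n + 1 => ((decide (0 < codeDet code (triI n) (triJ n) (triK n)) && N.testBit (2 * n + 1)) ||
      (decide (codeDet code (triI n) (triJ n) (triK n) < 0) && N.testBit (2 * n))) &&
      doneOk code N n

def Cert.check : Cert → Nat → Nat → Bool
  | .l rs n, S, _ => (runRules rs S).testBit (2 * n) && (runRules rs S).testBit (2 * n + 1)
  | .m rs b, S, N => (runRules rs S).testBit b && N.testBit b
  | .d c, _, N => doneOk c N 10
  | .s b y n, S, N => y.check (S ||| 2 ^ b) N && n.check S (N ||| 2 ^ b)

/-- The hypotheses on the "forced" predicate. -/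
structure ForcedSys (F : Nat → Nat → Nat → Prop) : Prop where
  cyc : ∀ i j k, F i j k → F j k i
  cons : ∀ i j k, i < 5 → j < 5 → k < 5 → i ≠ j → j ≠ k → i ≠ k → F i j k → ¬ F i k j
  r0 : ∀ t s p q r, t < 5 → s < 5 → p < 5 → q < 5 → r < 5 → [t, s, p, q, r].Nodup →
    F t s p → F t p q → F t q s → F s p q
  r1 : ∀ t s p q r, t < 5 → s < 5 → p < 5 → q < 5 → r < 5 → [t, s, p, q, r].Nodup →
    F t s p → F t s q → F t s r → F t p q → F t q r → F t p r
  r2 : ∀ t s p q r, t < 5 → s < 5 → p < 5 → q < 5 → r < 5 → [t, s, p, q, r].Nodup →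
    F t p s → F t q s → F t r s → F t p q → F t q r → F t p r

def LitFact (F : Nat → Nat → Nat → Prop) (b : Nat) : Prop :=
  F (litTri b).1 (litTri b).2.1 (litTri b).2.2

def MaskInv (F : Nat → Nat → Nat → Prop) (S : Nat) : Prop := ∀ b, S.testBit b = true → LitFact F b

theorem maskInv_or {F : Nat → Nat → Nat → Prop} {S T : Nat} :
    MaskInv F (S ||| T) ↔ MaskInv F S ∧ MaskInv F T := by
  simp only [MaskInv, Nat.testBit_or, Bool.or_eq_true]
  exact ⟨fun h => ⟨fun b hb => h b (.inl hb), fun b hb => h b (.inr hb)⟩,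
    fun h b hb => hb.elim (h.1 b) (h.2 b)⟩

theorem maskInv_pow {F : Nat → Nat → Nat → Prop} {b : Nat} : MaskInv F (2 ^ b) ↔ LitFact F b := by
  simp [MaskInv, Nat.testBit_two_pow]

theorem ForcedSys.inv_lm {F : Nat → Nat → Nat → Prop} (H : ForcedSys F) {i j k : Nat}
    (hi : i < 5) (hj : j < 5) (hk : k < 5) (h1 : i ≠ j) (h2 : j ≠ k) (h3 : i ≠ k) :
    MaskInv F (lm i j k) ↔ F i j k := by
  rw [lm, maskInv_pow, LitFact]
  rcases litTri_litBit i hi j hj k hk h1 h2 h3 with h | h | h <;> rw [h]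
  · exact ⟨fun h => H.cyc _ _ _ (H.cyc _ _ _ h), H.cyc _ _ _⟩
  · exact ⟨H.cyc _ _ _, fun h => H.cyc _ _ _ (H.cyc _ _ _ h)⟩

theorem ForcedSys.inv_applyRule {F : Nat → Nat → Nat → Prop} (H : ForcedSys F) {S : Nat}
    (hS : MaskInv F S) (c : Nat) : MaskInv F (applyRule c S) := by
  unfold applyRule
  generalize ht : c % 5 = t
  generalize hs : c / 5 % 5 = s
  generalize hp : c / 25 % 5 = p
  generalize hq : c / 125 % 5 = q
  generalize hr : c / 625 % 5 = r
  generalize c / 3125 = y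
  have ht : t < 5 := by omega
  have hs : s < 5 := by omega
  have hp : p < 5 := by omega
  have hq : q < 5 := by omega
  have hr : r < 5 := by omega
  cases hd : distinct5 t s p q r
  · exact hS
  cases hb : Nat.beq (S &&& (mkRule y t s p q r).1) (mkRule y t s p q r).1
  · exact hS
  simp only [cond_true]
  have hb := Nat.eq_of_beq_eq_true hb
  have hprem : MaskInv F (mkRule y t s p q r).1 := by
    intro b hbit
    rw [← hb, Nat.testBit_and, Bool.and_eq_true] at hbit
    exact hS b hbit.1
  have hd' : [t, s, p, q, r].Nodup := by
    simp [distinct5] at hd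
    simp
    tauto
  have hdd := hd'
  simp only [List.nodup_cons, List.mem_cons, List.not_mem_nil, or_false, not_or, List.nodup_nil,
    not_false_eq_true, and_true] at hdd
  obtain ⟨⟨h1, h2, h3, h4⟩, ⟨h5, h6, h7⟩, ⟨h8, h9⟩, h10⟩ := hdd
  refine maskInv_or.2 ⟨hS, ?_⟩
  unfold mkRule at hprem ⊢
  cases hy : y == 0
  · cases hy' : y == 1
    · simp only [hy, hy', cond_false, cond_true, maskInv_or] at hprem ⊢
      simp only [H.inv_lm, ht, hs, hp, hq, hr, h1, h2, h3, h4, h5, h6, h7, h8, h9, h10, ne_eq,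
        Ne.symm h1, Ne.symm h5, Ne.symm h6, Ne.symm h7, not_false_eq_true] at hprem ⊢
      exact H.r2 t s p q r ht hs hp hq hr hd' hprem.1 hprem.2.1 hprem.2.2.1 hprem.2.2.2.1
        hprem.2.2.2.2
    · simp only [hy, hy', cond_false, cond_true, maskInv_or] at hprem ⊢
      simp only [H.inv_lm, ht, hs, hp, hq, hr, h1, h2, h3, h4, h5, h6, h7, h8, h9, h10, ne_eq,
        not_false_eq_true] at hprem ⊢
      exact H.r1 t s p q r ht hs hp hq hr hd' hprem.1 hprem.2.1 hprem.2.2.1 hprem.2.2.2.1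
        hprem.2.2.2.2
  · simp only [hy, cond_true, maskInv_or] at hprem ⊢
    simp only [H.inv_lm, ht, hs, hp, hq, hr, h1, h2, h3, h4, h5, h6, h7, h8, h9, h10, ne_eq,
        Ne.symm h5, Ne.symm h6, not_false_eq_true] at hprem ⊢
    exact H.r0 t s p q r ht hs hp hq hr hd' hprem.1 hprem.2.1 hprem.2.2

theorem ForcedSys.inv_runRules {F : Nat → Nat → Nat → Prop} (H : ForcedSys F) :
    ∀ (l : List Nat) {S : Nat}, MaskInv F S → MaskInv F (runRules l S)
  | [], _, h => h
  | r :: l, _, h => H.inv_runRules l (H.inv_applyRule h r)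

theorem tri_ok : ∀ n, triI n < triJ n ∧ triJ n < triK n ∧ triK n < 5 := by
  intro n
  by_cases h : n < 9
  · interval_cases n <;> decide
  · obtain ⟨m, rfl⟩ : ∃ m, n = m + 9 := ⟨n - 9, by omega⟩
    simp [triI, triJ, triK]

theorem fact_even {F : Nat → Nat → Nat → Prop} (n : Nat) :
    LitFact F (2 * n) ↔ F (triI n) (triJ n) (triK n) := by
  simp [LitFact, litTri]

theorem fact_odd {F : Nat → Nat → Nat → Prop} (n : Nat) :
    LitFact F (2 * n + 1) ↔ F (triI n) (triK n) (triJ n) := by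
  have h1 : (2 * n + 1) % 2 = 1 := by omega
  have h2 : (2 * n + 1) / 2 = n := by omega
  simp [LitFact, litTri, h1, h2]

def Good (F : Nat → Nat → Nat → Prop) (code n : Nat) : Prop :=
  (0 < codeDet code (triI n) (triJ n) (triK n) ∧ ¬ F (triI n) (triK n) (triJ n)) ∨
  (codeDet code (triI n) (triJ n) (triK n) < 0 ∧ ¬ F (triI n) (triJ n) (triK n))

theorem doneOk_sound {F : Nat → Nat → Nat → Prop} {code N : Nat}
    (hN : ∀ b, N.testBit b = true → ¬ LitFact F b) :
    ∀ m, doneOk code N m = true → ∀ n < m, Good F code n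
  | 0, _, n, hn => absurd hn (by omega)
  | m + 1, h, n, hn => by
    simp only [doneOk, Bool.and_eq_true, Bool.or_eq_true, decide_eq_true_eq] at h
    by_cases hnm : n = m
    · subst hnm
      rcases h.1 with h | h
      · exact .inl ⟨h.1, fun hf => hN _ h.2 ((fact_odd n).2 hf)⟩
      · exact .inr ⟨h.1, fun hf => hN _ h.2 ((fact_even n).2 hf)⟩
    · exact doneOk_sound hN m h.2 n (by omega)

theorem ForcedSys.check_sound {F : Nat → Nat → Nat → Prop} (H : ForcedSys F) :
    ∀ (c : Cert) (S N : Nat), c.check S N = true → MaskInv F S →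
    (∀ b, N.testBit b = true → ¬ LitFact F b) → ∃ code, ∀ n < 10, Good F code n
  | .l rs n, S, N, h, hS, hN => by
    simp only [Cert.check, Bool.and_eq_true] at h
    have := H.inv_runRules rs hS
    have h1 := (fact_even n).1 (this _ h.1)
    have h2 := (fact_odd n).1 (this _ h.2)
    obtain ⟨a, b, c⟩ := tri_ok n
    exact absurd h2 (H.cons _ _ _ (by omega) (by omega) c (by omega) (by omega) (by omega) h1)
  | .m rs b, S, N, h, hS, hN => by
    simp only [Cert.check, Bool.and_eq_true] at h
    exact absurd (H.inv_runRules rs hS _ h.1) (hN _ h.2)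
  | .d c, S, N, h, hS, hN => ⟨c, doneOk_sound hN 10 h⟩
  | .s b y n, S, N, h, hS, hN => by
    simp only [Cert.check, Bool.and_eq_true] at h
    by_cases hb : LitFact F b
    · exact H.check_sound y _ _ h.1 (maskInv_or.2 ⟨hS, maskInv_pow.2 hb⟩) hN
    · refine H.check_sound n _ _ h.2 hS fun b' hb' => ?_
      rw [Nat.testBit_or, Bool.or_eq_true] at hb'
      rcases hb' with hb' | hb'
      · exact hN _ hb'
      · rw [Nat.testBit_two_pow, decide_eq_true_eq] at hb'
        exact hb' ▸ hb

open Cert in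
def cert0 : Cert :=
  (s 9 (s 8 (l [] 4)
  (s 11 (s 10 (l [] 5)
  (s 12 (s 13 (l [] 6)
  (s 15 (s 14 (l [] 7)
  (s 16 (l [4951] 6)
  (s 18 (l [7272] 0)
  (d 3363))))
  (s 16 (s 17 (l [] 8)
  (s 18 (s 19 (l [] 9)
  (d 6732))
  (d 7460)))
  (s 18 (s 17 (l [4883] 3)
  (s 19 (l [] 9)
  (d 6732)))
  (d 5107)))))
  (s 14 (s 15 (l [] 7)
  (s 17 (m [5551] 12)
  (s 19 (s 13 (l [7392] 0)
  (s 18 (l [] 9)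
  (d 7460)))
  (d 8076))))
  (s 16 (s 17 (l [] 8)
  (s 19 (m [7904] 14)
  (d 4951)))
  (s 18 (s 19 (l [] 9)
  (d 4315))
  (d 970))))))
  (s 12 (s 13 (l [] 6)
  (s 15 (s 14 (l [] 7)
  (s 16 (l [4951] 6)
  (s 18 (l [7272] 0)
  (d 9076))))
  (s 17 (s 16 (l [] 8)
  (s 19 (s 18 (l [] 9)
  (d 8232))
  (d 8960)))
  (s 19 (s 10 (m [9028] 17)
  (s 18 (l [] 9)
  (d 7460)))
  (d 3607)))))
  (s 14 (s 15 (l [] 7)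
  (s 17 (m [5551] 12)
  (s 19 (s 10 (s 13 (l [7392] 0)
  (s 16 (l [4759] 4)
  (s 18 (l [] 9)
  (d 8232))))
  (s 13 (l [7392] 0)
  (s 18 (l [] 9)
  (d 7460))))
  (d 3863))))
  (s 17 (s 16 (l [] 8)
  (s 18 (s 10 (m [8028] 12)
  (s 19 (l [] 9)
  (d 4315)))
  (d 5951)))
  (s 19 (s 18 (l [] 9)
  (d 5815))
  (d 1470)))))))
  (s 11 (m [7980] 9)
  (s 12 (s 13 (l [] 6)
  (s 15 (s 14 (l [] 7)
  (s 16 (l [4951] 6)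
  (s 18 (s 19 (l [] 9)
  (d 8832))
  (d 8360))))
  (s 17 (s 16 (l [] 8)
  (s 19 (s 14 (s 8 (l [4147] 0)
  (s 18 (l [] 9)
  (d 8232)))
  (s 18 (l [] 9)
  (d 8360)))
  (d 8476)))
  (s 19 (s 8 (m [9080, 9028] 17)
  (s 10 (m [9028] 17)
  (s 18 (l [] 9)
  (d 7460))))
  (d 5351)))))
  (s 15 (s 14 (l [] 7)
  (s 16 (s 17 (l [] 8)
  (s 18 (m [4951, 6007] 9)
  (d 5663)))
  (s 18 (s 13 (m [6007] 9)
  (s 19 (l [] 9)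
  (d 8832)))
  (d 6007))))
  (s 17 (s 14 (m [5551] 12)
  (s 16 (l [] 8)
  (s 18 (s 13 (m [4851] 15)
  (s 19 (l [] 9)
  (d 8476)))
  (d 6007))))
  (s 18 (s 19 (l [] 9)
  (d 4615))
  (d 2070)))))))

open Cert in
def cert1 : Cert :=
  (s 11 (s 10 (l [] 5)
  (s 13 (s 12 (l [] 6)
  (s 15 (s 14 (l [] 7)
  (s 17 (s 16 (l [] 8)
  (s 19 (m [6448] 7)
  (d 9176)))
  (s 18 (s 19 (l [] 9)
  (d 8632))
  (d 9160))))
  (s 17 (m [4851] 15)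
  (s 18 (s 8 (m [8680, 9152] 15)
  (s 19 (l [] 9)
  (d 7360)))
  (d 3707)))))
  (s 15 (s 14 (l [] 7)
  (s 16 (m [4951] 13)
  (s 19 (s 8 (m [8680, 8652] 13)
  (s 18 (l [] 9)
  (d 4115)))
  (d 6051))))
  (s 16 (s 17 (l [] 8)
  (s 18 (s 8 (s 12 (l [8680, 7388] 1)
  (s 14 (l [3559] 4)
  (s 19 (l [] 9)
  (d 8632))))
  (s 12 (m [6051, 3559] 9)
  (s 19 (l [] 9)
  (d 7360))))
  (d 4263)))
  (s 18 (s 19 (l [] 9)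
  (d 5915))
  (d 1670))))))
  (s 13 (s 12 (l [] 6)
  (s 15 (s 14 (l [] 7)
  (s 16 (s 17 (l [] 8)
  (s 18 (s 10 (m [3323] 7)
  (s 19 (l [] 9)
  (d 8632)))
  (d 8676)))
  (s 19 (s 18 (l [] 9)
  (d 9132))
  (d 8660))))
  (s 17 (m [4851] 15)
  (s 18 (s 6 (s 14 (s 8 (l [7452] 6)
  (s 10 (m [9180] 8)
  (s 19 (l [] 9)
  (d 7360))))
  (s 16 (s 10 (l [4023] 1)
  (s 19 (l [] 9)
  (d 8632)))
  (s 19 (l [] 9)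
  (d 8660))))
  (s 19 (l [] 9)
  (d 4615)))
  (d 5551)))))
  (s 15 (s 14 (l [] 7)
  (s 16 (m [4951] 13)
  (s 19 (s 6 (s 12 (m [5351, 5883] 11)
  (s 18 (l [] 9)
  (d 9132)))
  (s 18 (l [] 9)
  (d 8360)))
  (d 5707))))
  (s 17 (s 16 (l [] 8)
  (s 19 (s 10 (s 6 (s 12 (l [3683] 3)
  (s 14 (m [5551] 12)
  (s 18 (l [] 9)
  (d 9132))))
  (s 14 (m [5551, 3683] 7)
  (s 18 (l [] 9)
  (d 8360))))
  (s 18 (l [] 9)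
  (d 1670)))
  (d 5763)))
  (s 19 (s 18 (l [] 9)
  (d 4915))
  (d 2170))))))

open Cert in
def cert2 : Cert :=
  (s 9 (s 8 (l [] 4)
  (s 10 (m [4115] 5)
  (s 12 (s 13 (l [] 6)
  (s 14 (m [2102] 5)
  (s 16 (s 4 (m [1826] 10)
  (s 15 (l [586, 7272] 0)
  (s 17 (l [] 8)
  (s 18 (s 19 (l [] 9)
  (d 6732))
  (d 7460)))))
  (s 18 (s 4 (l [2230, 7272] 0)
  (s 11 (s 15 (l [7272] 0)
  (s 17 (l [4883] 3)
  (s 19 (l [] 9)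
  (d 6732))))
  (s 15 (l [7272] 0)
  (s 19 (l [] 9)
  (d 8960)))))
  (d 6488)))))
  (s 14 (m [2102] 5)
  (s 16 (s 4 (m [1826] 10)
  (s 17 (l [] 8)
  (s 19 (s 11 (m [1478] 5)
  (s 18 (l [] 9)
  (d 5815)))
  (d 4951))))
  (s 18 (s 19 (l [] 9)
  (d 7884))
  (d 4759)))))))
  (s 11 (s 10 (l [] 5)
  (s 12 (s 13 (l [] 6)
  (s 14 (s 4 (l [1730, 6816] 0)
  (s 8 (l [1110, 4147] 0)
  (s 15 (l [] 7)
  (s 16 (m [1478] 5)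
  (s 18 (m [978] 9)
  (d 5107))))))
  (s 16 (m [1478] 5)
  (s 18 (m [978] 9)
  (d 7204)))))
  (s 14 (s 15 (l [] 7)
  (s 16 (m [1478] 5)
  (s 18 (m [978] 9)
  (d 7548))))
  (s 16 (m [1478] 5)
  (s 18 (m [978] 9)
  (d 4079))))))
  (s 12 (s 13 (l [] 6)
  (s 14 (s 15 (l [] 7)
  (s 17 (m [9016] 5)
  (s 19 (s 4 (l [2426, 4147] 0)
  (s 8 (l [4147] 0)
  (s 10 (m [9028] 17)
  (s 18 (l [] 9)
  (d 7460)))))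
  (d 6972))))
  (s 16 (s 17 (l [] 8)
  (s 19 (m [558] 14)
  (d 6616)))
  (s 18 (s 19 (l [] 9)
  (d 3491))
  (d 5235)))))
  (s 14 (s 15 (l [] 7)
  (s 17 (s 16 (l [] 8)
  (s 18 (m [434] 12)
  (d 4423)))
  (s 18 (s 19 (l [] 9)
  (d 7740))
  (d 4147))))
  (s 16 (s 15 (s 4 (s 13 (l [6836] 1)
  (s 17 (l [] 8)
  (s 19 (m [334] 13)
  (d 6616))))
  (s 17 (l [] 8)
  (s 18 (s 8 (m [1202, 7144] 4)
  (s 19 (l [] 9)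
  (d 1470)))
  (d 5663))))
  (s 17 (l [] 8)
  (s 18 (s 19 (l [] 9)
  (d 7740))
  (d 4147))))
  (s 18 (s 13 (s 15 (m [6007] 9)
  (s 17 (m [358] 15)
  (s 19 (l [] 9)
  (d 7740))))
  (s 19 (l [] 9)
  (d 3491)))
  (d 2690)))))))

open Cert in
def cert3 : Cert :=
  (s 11 (s 4 (s 6 (s 8 (l [5535] 1)
  (s 10 (l [] 5)
  (s 13 (s 12 (l [] 6)
  (s 14 (m [2426] 8)
  (s 16 (l [1654] 1)
  (s 19 (l [1730, 7148] 1)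
  (d 6788)))))
  (s 14 (m [2426] 8)
  (s 16 (l [1654] 1)
  (s 19 (s 18 (l [] 9)
  (d 7584))
  (d 4459)))))))
  (s 10 (l [] 5)
  (s 12 (s 13 (l [] 6)
  (s 14 (l [1730, 6816] 0)
  (s 16 (l [1654] 1)
  (s 18 (m [1730, 4883] 6)
  (d 7204)))))
  (s 14 (s 15 (l [] 7)
  (s 16 (l [1654] 1)
  (s 18 (m [2426, 1054] 6)
  (d 7548))))
  (s 16 (l [1654] 1)
  (s 18 (s 8 (m [1054] 6)
  (s 19 (l [] 9)
  (d 6788)))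
  (d 4079)))))))
  (s 10 (l [] 5)
  (s 13 (s 12 (l [] 6)
  (s 15 (s 14 (l [] 7)
  (s 17 (s 16 (l [] 8)
  (s 19 (m [6448] 7)
  (d 9176)))
  (s 18 (s 19 (l [] 9)
  (d 8632))
  (d 9160))))
  (s 17 (s 14 (m [486, 6448] 7)
  (s 16 (l [] 8)
  (s 19 (m [6448] 7)
  (d 9176))))
  (s 18 (s 8 (m [1054, 4235] 5)
  (s 19 (l [] 9)
  (d 7360)))
  (d 3707)))))
  (s 15 (s 14 (l [] 7)
  (s 16 (m [1478] 5)
  (s 19 (s 8 (s 6 (m [4235] 5)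
  (s 18 (l [] 9)
  (d 7204)))
  (s 18 (l [] 9)
  (d 4115)))
  (d 6051))))
  (s 16 (m [1478] 5)
  (s 18 (s 19 (l [] 9)
  (d 5915))
  (d 1670)))))))
  (s 13 (s 12 (l [] 6)
  (s 14 (s 15 (l [] 7)
  (s 16 (s 17 (l [] 8)
  (s 18 (s 6 (s 4 (l [1826, 4023] 1)
  (s 8 (l [7452] 6)
  (s 10 (l [4023] 1)
  (s 19 (l [] 9)
  (d 7360)))))
  (s 19 (l [] 9)
  (d 7740)))
  (d 7272)))
  (s 18 (m [582] 16)
  (d 6816))))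
  (s 16 (s 4 (s 15 (l [6836] 1)
  (s 17 (l [] 8)
  (s 18 (m [1826, 3323] 7)
  (d 7272))))
  (s 17 (l [] 8)
  (s 18 (s 10 (m [3323] 7)
  (s 19 (l [] 9)
  (d 8632)))
  (d 8676))))
  (s 19 (s 18 (l [] 9)
  (d 3691))
  (d 5535)))))
  (s 14 (s 15 (l [] 7)
  (s 17 (s 4 (s 12 (l [6816] 0)
  (s 16 (l [] 8)
  (s 18 (m [434] 12)
  (d 6816))))
  (s 16 (l [] 8)
  (s 19 (s 10 (s 12 (m [9016] 5)
  (s 18 (l [] 9)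
  (d 6816)))
  (s 18 (l [] 9)
  (d 1670)))
  (d 5763))))
  (s 19 (s 18 (l [] 9)
  (d 8040))
  (d 3847))))
  (s 16 (s 17 (l [] 8)
  (s 19 (s 15 (m [334] 13)
  (s 18 (l [] 9)
  (d 8040)))
  (d 4523)))
  (s 19 (s 6 (s 12 (s 15 (m [482, 5883] 11)
  (s 17 (m [5883] 11)
  (s 18 (l [] 9)
  (d 8040))))
  (s 18 (l [] 9)
  (d 3691)))
  (s 18 (l [] 9)
  (d 5235)))
  (d 2790))))))

open Cert in
def cert4 : Cert :=
  (s 5 (s 4 (l [] 2)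
  (s 7 (s 6 (l [] 3)
  cert0)
  (s 9 (s 8 (l [] 4)
  (s 10 (m [8080] 7)
  (s 13 (s 12 (l [] 6)
  (s 14 (s 15 (l [] 7)
  (s 17 (l [5551] 6)
  (s 19 (s 18 (l [] 9)
  (d 6832))
  (d 7360))))
  (s 17 (s 16 (l [] 8)
  (s 19 (m [4851, 5507] 7)
  (d 3663)))
  (s 19 (s 15 (m [5507] 7)
  (s 18 (l [] 9)
  (d 6832)))
  (d 5507)))))
  (s 14 (s 15 (l [] 7)
  (s 16 (s 17 (l [] 8)
  (s 18 (s 12 (s 6 (l [4267] 0)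
  (s 19 (l [] 9)
  (d 6732)))
  (s 19 (l [] 9)
  (d 7360)))
  (d 7976)))
  (s 18 (s 6 (m [8480, 8404] 16)
  (s 11 (m [8404] 16)
  (s 19 (l [] 9)
  (d 8960))))
  (d 4851))))
  (s 16 (s 12 (m [6051] 14)
  (s 17 (l [] 8)
  (s 19 (s 15 (m [4951] 13)
  (s 18 (l [] 9)
  (d 7976)))
  (d 5507))))
  (s 19 (s 18 (l [] 9)
  (d 4115))
  (d 1070)))))))
  cert1)))
  (s 7 (s 6 (l [] 3)
  cert2)
  (s 9 (s 8 (l [] 4)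
  (s 11 (s 10 (l [] 5)
  (s 13 (s 12 (l [] 6)
  (s 14 (m [2102] 5)
  (s 16 (m [1478] 5)
  (s 19 (s 6 (s 4 (l [1730, 7148] 1)
  (s 15 (l [5507] 3)
  (s 17 (l [7148] 1)
  (s 18 (l [] 9)
  (d 6832)))))
  (s 18 (l [] 9)
  (d 4759)))
  (d 6788)))))
  (s 14 (m [2102] 5)
  (s 16 (m [1478] 5)
  (s 19 (s 18 (l [] 9)
  (d 7584))
  (d 4459))))))
  (s 13 (s 12 (l [] 6)
  (s 14 (m [2102] 5)
  (s 16 (s 4 (l [2230, 6836] 1)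
  (s 6 (s 10 (l [1210, 4023] 1)
  (s 17 (l [] 8)
  (s 19 (m [1102] 11)
  (d 5507))))
  (s 17 (l [] 8)
  (s 19 (s 18 (l [] 9)
  (d 5815))
  (d 1470)))))
  (s 19 (s 4 (m [2230, 5507] 7)
  (s 6 (m [1102] 11)
  (s 18 (l [] 9)
  (d 5951))))
  (d 7304)))))
  (s 14 (m [2102] 5)
  (s 16 (s 17 (l [] 8)
  (s 19 (s 4 (m [1826, 954] 7)
  (s 6 (m [1102] 11)
  (s 12 (m [558] 14)
  (s 18 (l [] 9)
  (d 5815)))))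
  (d 7648)))
  (s 19 (s 10 (m [954] 7)
  (s 18 (l [] 9)
  (d 7584)))
  (d 4179)))))))
  cert3)))

open Cert in
def cert5 : Cert :=
  (s 9 (s 8 (l [] 4)
  (s 11 (m [4095] 3)
  (s 12 (m [2702] 3)
  (s 14 (s 15 (l [] 7)
  (s 17 (s 2 (m [1726] 11)
  (s 13 (l [486, 7392] 0)
  (s 16 (l [] 8)
  (s 19 (s 18 (l [] 9)
  (d 8232))
  (d 8960)))))
  (s 19 (s 2 (l [2830, 7392] 0)
  (s 10 (s 13 (l [7392] 0)
  (s 16 (l [4759] 4)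
  (s 18 (l [] 9)
  (d 8232))))
  (s 13 (l [7392] 0)
  (s 18 (l [] 9)
  (d 7460)))))
  (d 6988))))
  (s 17 (s 2 (m [1726] 11)
  (s 16 (l [] 8)
  (s 18 (s 10 (m [1454] 3)
  (s 19 (l [] 9)
  (d 4315)))
  (d 5951))))
  (s 19 (s 18 (l [] 9)
  (d 8384))
  (d 5259)))))))
  (s 10 (s 11 (l [] 5)
  (s 12 (m [2702] 3)
  (s 15 (s 14 (l [] 7)
  (s 17 (m [1454] 3)
  (s 18 (s 8 (s 2 (l [1830, 7144] 2)
  (s 13 (l [3707] 3)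
  (s 16 (l [7144] 2)
  (s 19 (l [] 9)
  (d 8832)))))
  (s 19 (l [] 9)
  (d 5259)))
  (d 8788))))
  (s 17 (m [1454] 3)
  (s 18 (s 19 (l [] 9)
  (d 6584))
  (d 3459))))))
  (s 12 (m [2702] 3)
  (s 15 (s 14 (l [] 7)
  (s 17 (s 2 (l [2830, 8636] 1)
  (s 8 (s 11 (l [1110, 4019] 2)
  (s 16 (l [] 8)
  (s 18 (m [1202] 10)
  (d 6007))))
  (s 16 (l [] 8)
  (s 18 (s 19 (l [] 9)
  (d 4315))
  (d 970)))))
  (s 18 (s 2 (m [2830, 6007] 9)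
  (s 8 (m [1202] 10)
  (s 19 (l [] 9)
  (d 4951))))
  (d 8304))))
  (s 17 (s 16 (l [] 8)
  (s 18 (s 2 (m [1726, 978] 9)
  (s 8 (m [1202] 10)
  (s 14 (m [434] 12)
  (s 19 (l [] 9)
  (d 4315)))))
  (d 7148)))
  (s 18 (s 11 (m [978] 9)
  (s 19 (l [] 9)
  (d 6584)))
  (d 5179)))))))

open Cert in
def cert6 : Cert :=
  (s 8 (l [] 4)
  (s 10 (s 11 (l [] 5)
  (s 12 (s 13 (l [] 6)
  (s 14 (s 2 (l [1830, 6696] 0)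
  (s 6 (l [1210, 4267] 0)
  (s 15 (l [] 7)
  (s 17 (m [1454] 3)
  (s 19 (m [954] 7)
  (d 3607))))))
  (s 17 (m [1454] 3)
  (s 19 (m [954] 7)
  (d 6548)))))
  (s 14 (s 15 (l [] 7)
  (s 17 (m [1454] 3)
  (s 19 (m [954] 7)
  (d 7704))))
  (s 17 (m [1454] 3)
  (s 19 (m [954] 7)
  (d 4579))))))
  (s 12 (s 13 (l [] 6)
  (s 14 (s 15 (l [] 7)
  (s 16 (m [8396] 3)
  (s 18 (s 2 (l [2926, 4267] 0)
  (s 6 (l [4267] 0)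
  (s 11 (m [8404] 16)
  (s 19 (l [] 9)
  (d 8960)))))
  (d 6472))))
  (s 16 (s 17 (l [] 8)
  (s 19 (m [558] 14)
  (d 3423)))
  (s 19 (s 18 (l [] 9)
  (d 7240))
  (d 5147)))))
  (s 14 (s 15 (l [] 7)
  (s 17 (s 16 (l [] 8)
  (s 18 (m [434] 12)
  (d 7616)))
  (s 19 (s 18 (l [] 9)
  (d 4491))
  (d 4235))))
  (s 17 (s 13 (s 2 (s 15 (l [8636] 1)
  (s 16 (l [] 8)
  (s 18 (m [358] 15)
  (d 7616))))
  (s 16 (l [] 8)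
  (s 19 (s 6 (m [1102, 7148] 2)
  (s 18 (l [] 9)
  (d 970)))
  (d 3663))))
  (s 16 (l [] 8)
  (s 19 (s 18 (l [] 9)
  (d 7240))
  (d 5147))))
  (s 19 (s 15 (s 13 (m [5507] 7)
  (s 16 (m [334] 13)
  (s 18 (l [] 9)
  (d 7240))))
  (s 18 (l [] 9)
  (d 4491)))
  (d 1190)))))))

open Cert in
def cert7 : Cert :=
  (s 10 (s 2 (s 8 (s 6 (l [4335] 1)
  (s 11 (l [] 5)
  (s 12 (m [2926] 6)
  (s 15 (s 14 (l [] 7)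
  (s 17 (l [1454] 1)
  (s 18 (l [1830, 7144] 2)
  (d 8788))))
  (s 17 (l [1454] 1)
  (s 18 (s 19 (l [] 9)
  (d 6584))
  (d 3459)))))))
  (s 11 (l [] 5)
  (s 12 (s 13 (l [] 6)
  (s 14 (l [1830, 6696] 0)
  (s 17 (l [1454] 1)
  (s 19 (m [2926, 1178] 8)
  (d 6548)))))
  (s 14 (s 15 (l [] 7)
  (s 17 (l [1454] 1)
  (s 19 (m [1830, 4759] 8)
  (d 7704))))
  (s 17 (l [1454] 1)
  (s 19 (s 6 (m [1178] 8)
  (s 18 (l [] 9)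
  (d 8788)))
  (d 4579)))))))
  (s 11 (l [] 5)
  (s 13 (s 12 (l [] 6)
  (s 15 (s 14 (l [] 7)
  (s 16 (s 17 (l [] 8)
  (s 18 (m [6444] 9)
  (d 8676)))
  (s 19 (s 18 (l [] 9)
  (d 9132))
  (d 8660))))
  (s 17 (m [1454] 3)
  (s 18 (s 6 (s 8 (m [4335] 3)
  (s 19 (l [] 9)
  (d 7704)))
  (s 19 (l [] 9)
  (d 4615)))
  (d 5551)))))
  (s 15 (s 14 (l [] 7)
  (s 16 (s 12 (m [586, 6444] 9)
  (s 17 (l [] 8)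
  (s 18 (m [6444] 9)
  (d 8676))))
  (s 19 (s 6 (m [1178, 4335] 3)
  (s 18 (l [] 9)
  (d 8360)))
  (d 5707))))
  (s 17 (m [1454] 3)
  (s 19 (s 18 (l [] 9)
  (d 4915))
  (d 2170)))))))
  (s 12 (s 13 (l [] 6)
  (s 15 (s 14 (l [] 7)
  (s 17 (s 16 (l [] 8)
  (s 19 (s 8 (s 2 (l [1726, 4019] 2)
  (s 6 (l [8652] 6)
  (s 11 (l [4019] 2)
  (s 18 (l [] 9)
  (d 8360)))))
  (s 18 (l [] 9)
  (d 7240)))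
  (d 8272)))
  (s 19 (m [482] 17)
  (d 8816))))
  (s 16 (s 2 (s 14 (l [6696] 0)
  (s 17 (l [] 8)
  (s 19 (m [558] 14)
  (d 8816))))
  (s 17 (l [] 8)
  (s 18 (s 11 (s 14 (m [8396] 3)
  (s 19 (l [] 9)
  (d 8816)))
  (s 19 (l [] 9)
  (d 2170)))
  (d 4263))))
  (s 18 (s 19 (l [] 9)
  (d 9040))
  (d 3347)))))
  (s 15 (s 14 (l [] 7)
  (s 17 (s 2 (s 13 (l [8636] 1)
  (s 16 (l [] 8)
  (s 19 (m [1726, 3319] 9)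
  (d 8272))))
  (s 16 (l [] 8)
  (s 19 (s 11 (m [3319] 9)
  (s 18 (l [] 9)
  (d 9132)))
  (d 9176))))
  (s 18 (s 19 (l [] 9)
  (d 5691))
  (d 6035))))
  (s 17 (s 16 (l [] 8)
  (s 18 (s 13 (m [358] 15)
  (s 19 (l [] 9)
  (d 9040)))
  (d 4023)))
  (s 18 (s 8 (s 14 (s 13 (m [582, 5259] 10)
  (s 16 (m [5259] 10)
  (s 19 (l [] 9)
  (d 9040))))
  (s 19 (l [] 9)
  (d 5691)))
  (s 19 (l [] 9)
  (d 4235)))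
  (d 1790))))))

open Cert in
def cert8 : Cert :=
  (s 8 (s 9 (l [] 4)
  (s 10 (s 2 (s 4 (l [7920] 0)
  (s 11 (l [] 5)
  (s 12 (l [2778] 0)
  (s 15 (s 14 (l [] 7)
  (s 17 (m [1778] 4)
  (s 18 (l [2830, 3707] 3)
  (d 8788))))
  (s 17 (m [1778] 4)
  (s 18 (s 19 (l [] 9)
  (d 6584))
  (d 3459)))))))
  (s 11 (l [] 5)
  (s 12 (m [2702] 3)
  (s 14 (s 15 (l [] 7)
  (s 17 (s 16 (l [] 8)
  (s 18 (m [434] 12)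
  (d 4423)))
  (s 18 (s 19 (l [] 9)
  (d 7740))
  (d 4147))))
  (s 16 (s 15 (s 4 (m [7220] 3)
  (s 17 (l [] 8)
  (s 18 (m [7144] 4)
  (d 5663))))
  (s 17 (l [] 8)
  (s 18 (s 19 (l [] 9)
  (d 7740))
  (d 4147))))
  (s 18 (s 13 (s 15 (l [3707] 3)
  (s 17 (m [358] 15)
  (s 19 (l [] 9)
  (d 7740))))
  (s 19 (l [] 9)
  (d 3491)))
  (d 2690)))))))
  (s 12 (m [2702] 3)
  (s 14 (s 15 (l [] 7)
  (s 16 (s 4 (s 2 (l [2830, 3691] 0)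
  (s 11 (m [1654] 2)
  (s 17 (l [] 8)
  (s 18 (m [1202] 10)
  (d 4147)))))
  (s 17 (l [] 8)
  (s 18 (m [1202] 10)
  (d 5179))))
  (s 18 (m [1202] 10)
  (d 6444))))
  (s 16 (s 17 (l [] 8)
  (s 18 (m [1202] 10)
  (d 9008)))
  (s 18 (m [1202] 10)
  (d 3319)))))))
  (s 10 (s 11 (l [] 5)
  (s 12 (m [2702] 3)
  (s 14 (s 4 (m [2426] 8)
  (s 15 (l [] 7)
  (s 17 (s 2 (m [1778] 4)
  (s 9 (m [2102] 5)
  (s 16 (l [] 8)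
  (s 18 (m [434] 12)
  (d 4423)))))
  (s 19 (s 9 (m [2102] 5)
  (s 18 (l [] 9)
  (d 3459)))
  (d 6988)))))
  (s 17 (s 16 (l [] 8)
  (s 19 (s 2 (l [2830, 3663] 1)
  (s 9 (s 4 (l [2230, 7884] 4)
  (s 18 (l [] 9)
  (d 5951)))
  (s 18 (l [] 9)
  (d 2690))))
  (d 6664)))
  (s 19 (s 18 (l [] 9)
  (d 8928))
  (d 3539))))))
  (s 12 (m [2702] 3)
  (s 14 (s 9 (m [2102] 5)
  (s 15 (l [] 7)
  (s 16 (s 4 (m [2426] 8)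
  (s 17 (l [] 8)
  (s 18 (s 2 (m [2830, 5891] 5)
  (s 19 (l [] 9)
  (d 8076)))
  (d 5179))))
  (s 18 (s 2 (m [2830, 582] 16)
  (s 11 (m [978] 9)
  (s 17 (m [434] 12)
  (s 19 (l [] 9)
  (d 7740)))))
  (d 6444)))))
  (s 16 (s 17 (l [] 8)
  (s 18 (s 11 (s 2 (l [2830, 8008] 3)
  (s 4 (m [1654] 2)
  (s 19 (l [] 9)
  (d 4951))))
  (s 19 (l [] 9)
  (d 3539)))
  (d 8164)))
  (s 18 (s 19 (l [] 9)
  (d 7428))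
  (d 5039)))))))

open Cert in
def cert9 : Cert :=
  (s 11 (s 4 (s 2 (s 6 (l [8040] 0)
  (s 10 (l [] 5)
  (s 12 (m [2926] 6)
  (s 14 (l [2154] 0)
  (s 16 (s 17 (l [] 8)
  (s 18 (l [2230, 3539] 2)
  (d 8164)))
  (s 18 (s 19 (l [] 9)
  (d 7428))
  (d 5039)))))))
  (s 10 (l [] 5)
  (s 13 (s 12 (l [] 6)
  (s 14 (l [2154] 0)
  (s 16 (m [1654] 2)
  (s 19 (m [2230, 5507] 7)
  (d 6788)))))
  (s 14 (l [2154] 0)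
  (s 16 (m [1654] 2)
  (s 19 (s 18 (l [] 9)
  (d 7584))
  (d 4459)))))))
  (s 10 (l [] 5)
  (s 12 (s 13 (l [] 6)
  (s 14 (m [2102] 5)
  (s 16 (s 17 (l [] 8)
  (s 19 (m [558] 14)
  (d 3423)))
  (s 19 (s 18 (l [] 9)
  (d 7240))
  (d 5147)))))
  (s 14 (m [2102] 5)
  (s 17 (s 13 (s 2 (s 6 (m [7240] 5)
  (s 16 (l [] 8)
  (s 18 (m [358, 6736] 4)
  (d 5039))))
  (s 16 (l [] 8)
  (s 19 (s 6 (m [7148] 2)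
  (s 18 (l [] 9)
  (d 970)))
  (d 3663))))
  (s 16 (l [] 8)
  (s 19 (s 18 (l [] 9)
  (d 7240))
  (d 5147))))
  (s 19 (s 15 (s 6 (s 13 (l [5507] 3)
  (s 16 (m [334] 13)
  (s 18 (l [] 9)
  (d 7240))))
  (s 18 (l [] 9)
  (d 8164)))
  (s 18 (l [] 9)
  (d 4491)))
  (d 1190)))))))
  (s 12 (s 13 (l [] 6)
  (s 14 (m [2102] 5)
  (s 17 (s 2 (s 4 (l [2230, 3571] 0)
  (s 10 (m [1778] 4)
  (s 16 (l [] 8)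
  (s 19 (m [2926, 1102] 11)
  (d 5147)))))
  (s 16 (l [] 8)
  (s 19 (s 10 (m [954] 7)
  (s 18 (l [] 9)
  (d 7584)))
  (d 4179))))
  (s 19 (s 4 (m [2230, 482] 17)
  (s 10 (m [954] 7)
  (s 16 (m [558] 14)
  (s 18 (l [] 9)
  (d 7240)))))
  (d 6944)))))
  (s 14 (m [2102] 5)
  (s 17 (s 16 (l [] 8)
  (s 19 (s 6 (m [1102] 11)
  (s 10 (m [954] 7)
  (s 18 (l [] 9)
  (d 5039))))
  (d 8008)))
  (s 19 (s 6 (m [1102] 11)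
  (s 18 (l [] 9)
  (d 8928)))
  (d 3819))))))

open Cert in
def cert10 : Cert :=
  (s 12 (s 13 (l [] 6)
  (s 14 (s 15 (l [] 7)
  (s 17 (s 16 (l [] 8)
  (s 18 (s 10 (s 2 (l [2926, 6788] 1)
  (s 4 (l [2426, 4179] 7)
  (s 19 (l [] 9)
  (d 5763))))
  (s 19 (l [] 9)
  (d 8196)))
  (d 7392)))
  (s 19 (s 18 (l [] 9)
  (d 6696))
  (d 3571))))
  (s 17 (s 2 (s 15 (s 4 (l [3571] 0)
  (s 10 (m [1778] 4)
  (s 16 (l [] 8)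
  (s 19 (s 8 (l [2926, 8652] 6)
  (s 18 (l [] 9)
  (d 7240)))
  (d 8272)))))
  (s 16 (l [] 8)
  (s 18 (m [2926, 8888] 11)
  (d 7392))))
  (s 16 (l [] 8)
  (s 19 (s 6 (s 15 (s 8 (l [8652] 6)
  (s 10 (m [1178] 8)
  (s 18 (l [] 9)
  (d 7584))))
  (s 18 (l [] 9)
  (d 7392)))
  (s 18 (l [] 9)
  (d 5235)))
  (d 2790))))
  (s 19 (s 15 (m [482] 17)
  (s 18 (l [] 9)
  (d 6696)))
  (d 5295)))))
  (s 14 (s 15 (l [] 7)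
  (s 16 (s 13 (s 2 (m [5891] 5)
  (s 17 (l [] 8)
  (s 18 (s 6 (s 4 (l [2426, 7452] 6)
  (s 8 (l [7452] 6)
  (s 19 (l [] 9)
  (d 7704))))
  (s 19 (l [] 9)
  (d 7740)))
  (d 7272))))
  (s 17 (l [] 8)
  (s 19 (s 18 (l [] 9)
  (d 6696))
  (d 3571))))
  (s 18 (s 13 (m [582] 16)
  (s 17 (m [434] 12)
  (s 19 (l [] 9)
  (d 3571))))
  (d 7920))))
  (s 17 (s 16 (l [] 8)
  (s 18 (s 19 (l [] 9)
  (d 4883))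
  (d 4327)))
  (s 19 (s 16 (s 10 (s 2 (s 13 (m [6808] 7)
  (s 15 (m [334] 13)
  (s 18 (l [] 9)
  (d 6696))))
  (s 4 (s 15 (m [334, 6836] 2)
  (s 18 (l [] 9)
  (d 7272)))
  (s 18 (l [] 9)
  (d 8676))))
  (s 18 (l [] 9)
  (d 5883)))
  (s 18 (l [] 9)
  (d 4327)))
  (d 2910)))))

open Cert in
def cert11 : Cert :=
  (s 5 (s 4 (l [] 2)
  (s 7 (s 6 (l [] 3)
  cert5)
  (s 9 cert6
  cert7)))
  (s 7 (s 6 (l [] 3)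
  cert8)
  (s 9 (s 8 (l [] 4)
  cert9)
  (s 11 (s 10 (l [] 5)
  (s 12 (s 13 (l [] 6)
  (s 15 (s 14 (l [] 7)
  (s 17 (s 4 (m [5271] 3)
  (s 16 (l [] 8)
  (s 19 (s 8 (m [4019] 4)
  (s 18 (l [] 9)
  (d 7240)))
  (d 8272))))
  (s 19 (m [482] 17)
  (d 8420))))
  (s 16 (s 17 (l [] 8)
  (s 19 (s 2 (l [2926, 4303] 6)
  (s 4 (m [1654] 2)
  (s 18 (l [] 9)
  (d 4263))))
  (d 8892)))
  (s 18 (s 19 (l [] 9)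
  (d 8196))
  (d 5071)))))
  (s 14 (s 15 (l [] 7)
  (s 16 (s 4 (s 13 (l [1654, 3691] 0)
  (s 17 (l [] 8)
  (s 19 (l [2426, 6664] 2)
  (d 8892))))
  (s 17 (l [] 8)
  (s 18 (s 8 (m [1054, 7452] 12)
  (s 19 (l [] 9)
  (d 4235)))
  (d 1790))))
  (s 18 (s 13 (m [582] 16)
  (s 19 (l [] 9)
  (d 8196)))
  (d 4795))))
  (s 16 (s 17 (l [] 8)
  (s 19 (s 18 (l [] 9)
  (d 5883))
  (d 5827)))
  (s 18 (s 17 (s 2 (s 13 (m [358, 6736, 6684] 9)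
  (s 15 (s 4 (m [6684] 9)
  (s 19 (l [] 9)
  (d 8272)))
  (s 19 (l [] 9)
  (d 8196))))
  (s 4 (s 8 (m [1054, 5535] 2)
  (s 19 (l [] 9)
  (d 6788)))
  (s 19 (l [] 9)
  (d 9176))))
  (s 19 (l [] 9)
  (d 5827)))
  (d 2410))))))
  cert10))))

open Cert in
def cert12 : Cert :=
  (s 8 (s 9 (l [] 4)
  (s 10 (s 11 (l [] 5)
  (s 13 (m [2678] 1)
  (s 15 (m [2054] 1)
  (s 17 (s 16 (l [] 8)
  (s 19 (s 0 (l [2430, 7264] 2)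
  (s 12 (l [3683] 3)
  (s 14 (l [7264] 2)
  (s 18 (l [] 9)
  (d 9132)))))
  (d 8888)))
  (s 19 (s 18 (l [] 9)
  (d 6684))
  (d 3559))))))
  (s 13 (m [2678] 1)
  (s 15 (m [2054] 1)
  (s 16 (s 17 (l [] 8)
  (s 18 (s 11 (s 0 (l [2930, 7388] 1)
  (s 12 (l [7388] 1)
  (s 14 (l [3559] 4)
  (s 19 (l [] 9)
  (d 8632)))))
  (s 19 (l [] 9)
  (d 3559)))
  (d 7388)))
  (s 18 (s 19 (l [] 9)
  (d 8184))
  (d 5059)))))))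
  (s 11 (s 0 (s 9 (l [4195] 0)
  (s 10 (l [] 5)
  (s 13 (l [2678] 0)
  (s 15 (m [2226] 9)
  (s 16 (s 17 (l [] 8)
  (s 18 (l [2930, 7388] 1)
  (d 7388)))
  (s 18 (s 19 (l [] 9)
  (d 8184))
  (d 5059)))))))
  (s 10 (l [] 5)
  (s 13 (m [2678] 1)
  (s 14 (s 15 (l [] 7)
  (s 16 (s 17 (l [] 8)
  (s 18 (m [3559, 4195] 1)
  (d 7976)))
  (s 18 (s 9 (m [4195] 1)
  (s 19 (l [] 9)
  (d 5915)))
  (d 4851))))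
  (s 16 (s 12 (s 15 (l [586, 7388] 1)
  (s 17 (l [] 8)
  (s 18 (l [7388] 1)
  (d 7976))))
  (s 17 (l [] 8)
  (s 19 (s 9 (m [4195] 1)
  (s 18 (l [] 9)
  (d 9160)))
  (d 5507))))
  (s 19 (s 18 (l [] 9)
  (d 4115))
  (d 1070)))))))
  (s 13 (m [2678] 1)
  (s 15 (s 14 (l [] 7)
  (s 17 (s 0 (l [2930, 8016] 0)
  (s 10 (s 9 (l [1210, 4139] 2)
  (s 16 (l [] 8)
  (s 19 (m [1178] 8)
  (d 5707))))
  (s 16 (l [] 8)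
  (s 19 (s 18 (l [] 9)
  (d 4115))
  (d 1070)))))
  (s 19 (s 0 (m [2226, 1102] 11)
  (s 10 (m [1178] 8)
  (s 16 (m [334] 13)
  (s 18 (l [] 9)
  (d 4115)))))
  (d 6948))))
  (s 17 (s 16 (l [] 8)
  (s 19 (s 0 (m [2930, 5883] 11)
  (s 10 (m [1178] 8)
  (s 18 (l [] 9)
  (d 4851))))
  (d 8404)))
  (s 19 (s 9 (m [1102] 11)
  (s 18 (l [] 9)
  (d 6684)))
  (d 5279)))))))

open Cert in
def cert13 : Cert :=
  (s 10 (s 0 (s 7 (l [4315] 0)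
  (s 11 (l [] 5)
  (s 13 (m [2826] 7)
  (s 15 (l [2054] 0)
  (s 17 (s 16 (l [] 8)
  (s 19 (l [2430, 7264] 2)
  (d 8888)))
  (s 19 (s 18 (l [] 9)
  (d 6684))
  (d 3559)))))))
  (s 11 (l [] 5)
  (s 12 (s 13 (l [] 6)
  (s 15 (m [2054] 1)
  (s 17 (s 16 (l [] 8)
  (s 19 (m [3683, 4315] 1)
  (d 8476)))
  (s 19 (s 7 (m [4315] 1)
  (s 18 (l [] 9)
  (d 4915)))
  (d 5351)))))
  (s 15 (m [2054] 1)
  (s 17 (s 14 (s 13 (l [486, 7264] 2)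
  (s 16 (l [] 8)
  (s 19 (l [7264] 2)
  (d 8476))))
  (s 16 (l [] 8)
  (s 18 (s 7 (m [4315] 1)
  (s 19 (l [] 9)
  (d 8660)))
  (d 6007))))
  (s 18 (s 19 (l [] 9)
  (d 4615))
  (d 2070)))))))
  (s 13 (s 12 (l [] 6)
  (s 15 (m [2054] 1)
  (s 16 (s 0 (l [2430, 7896] 0)
  (s 11 (s 7 (l [1110, 4263] 1)
  (s 17 (l [] 8)
  (s 18 (m [1054] 6)
  (d 3707))))
  (s 17 (l [] 8)
  (s 18 (s 19 (l [] 9)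
  (d 4615))
  (d 2070)))))
  (s 18 (s 0 (m [2826, 1202] 10)
  (s 11 (m [1054] 6)
  (s 17 (m [358] 15)
  (s 19 (l [] 9)
  (d 4615)))))
  (d 6448)))))
  (s 15 (m [2054] 1)
  (s 16 (s 17 (l [] 8)
  (s 18 (s 0 (m [2430, 5259] 10)
  (s 11 (m [1054] 6)
  (s 19 (l [] 9)
  (d 5351))))
  (d 7904)))
  (s 18 (s 7 (m [1202] 10)
  (s 19 (l [] 9)
  (d 8184)))
  (d 4779))))))

open Cert in
def cert14 : Cert :=
  (s 11 (s 10 (l [] 5)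
  (s 13 (s 12 (l [] 6)
  (s 14 (s 15 (l [] 7)
  (s 16 (m [7896] 1)
  (s 18 (m [582] 16)
  (d 3323))))
  (s 16 (s 17 (l [] 8)
  (s 19 (s 0 (l [2826, 4263] 1)
  (s 7 (l [4263] 1)
  (s 9 (m [7904] 14)
  (s 18 (l [] 9)
  (d 9160)))))
  (d 6672)))
  (s 18 (s 19 (l [] 9)
  (d 7440))
  (d 5047)))))
  (s 15 (s 14 (l [] 7)
  (s 17 (s 12 (m [8016] 1)
  (s 16 (l [] 8)
  (s 18 (s 19 (l [] 9)
  (d 7440))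
  (d 5047))))
  (s 19 (s 12 (m [482] 17)
  (s 16 (m [334] 13)
  (s 18 (l [] 9)
  (d 5047))))
  (d 8016))))
  (s 16 (s 17 (l [] 8)
  (s 18 (s 19 (l [] 9)
  (d 4891))
  (d 4335)))
  (s 18 (s 17 (s 12 (m [4883] 6)
  (s 14 (m [434] 12)
  (s 19 (l [] 9)
  (d 7440))))
  (s 19 (l [] 9)
  (d 4891)))
  (d 990))))))
  (s 13 (s 12 (l [] 6)
  (s 14 (s 15 (l [] 7)
  (s 16 (m [7896] 1)
  (s 18 (m [582] 16)
  (d 9016))))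
  (s 17 (s 16 (l [] 8)
  (s 18 (s 10 (s 0 (l [2826, 8028] 6)
  (s 7 (l [8028] 6)
  (s 9 (l [358, 4139] 2)
  (s 19 (l [] 9)
  (d 8660)))))
  (s 19 (l [] 9)
  (d 7440)))
  (d 8172)))
  (s 19 (s 18 (l [] 9)
  (d 8940))
  (d 3547)))))
  (s 15 (s 14 (l [] 7)
  (s 17 (s 0 (s 12 (l [8016] 0)
  (s 16 (l [] 8)
  (s 18 (m [2226, 3339] 11)
  (d 8172))))
  (s 16 (l [] 8)
  (s 18 (s 9 (m [3339] 11)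
  (s 19 (l [] 9)
  (d 8832)))
  (d 9076))))
  (s 19 (s 12 (m [482] 17)
  (s 18 (l [] 9)
  (d 8940)))
  (d 3823))))
  (s 17 (s 16 (l [] 8)
  (s 19 (s 18 (l [] 9)
  (d 5891))
  (d 5835)))
  (s 19 (s 10 (s 16 (s 12 (m [558, 4759] 8)
  (s 14 (m [4759] 8)
  (s 18 (l [] 9)
  (d 8940))))
  (s 18 (l [] 9)
  (d 5891)))
  (s 18 (l [] 9)
  (d 4335)))
  (d 1490))))))

open Cert in
def cert15 : Cert :=
  (s 8 (s 9 (l [] 4)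
  (s 10 (s 0 (s 4 (l [7320] 0)
  (s 11 (l [] 5)
  (s 13 (l [2678] 0)
  (s 15 (m [2402] 4)
  (s 17 (s 16 (l [] 8)
  (s 19 (l [2930, 3683] 3)
  (d 8888)))
  (s 19 (s 18 (l [] 9)
  (d 6684))
  (d 3559)))))))
  (s 11 (l [] 5)
  (s 13 (m [2678] 1)
  (s 14 (s 15 (l [] 7)
  (s 17 (s 4 (m [7320] 1)
  (s 16 (l [] 8)
  (s 19 (m [7264] 4)
  (d 5763))))
  (s 19 (s 18 (l [] 9)
  (d 8040))
  (d 3847))))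
  (s 16 (s 17 (l [] 8)
  (s 19 (s 15 (m [334] 13)
  (s 18 (l [] 9)
  (d 8040)))
  (d 4523)))
  (s 19 (s 12 (s 15 (l [482, 3683] 3)
  (s 17 (l [3683] 3)
  (s 18 (l [] 9)
  (d 8040))))
  (s 18 (l [] 9)
  (d 3691)))
  (d 2790)))))))
  (s 13 (m [2678] 1)
  (s 15 (s 14 (l [] 7)
  (s 16 (s 0 (m [2402, 1826] 10)
  (s 11 (m [1478] 5)
  (s 17 (l [] 8)
  (s 19 (m [334] 13)
  (d 4523)))))
  (s 18 (s 0 (l [2930, 3667] 0)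
  (s 11 (s 4 (l [1730, 6684] 4)
  (s 19 (l [] 9)
  (d 6051)))
  (s 19 (l [] 9)
  (d 2790))))
  (d 6464))))
  (s 16 (s 4 (m [1826] 10)
  (s 17 (l [] 8)
  (s 18 (s 11 (m [1478] 5)
  (s 19 (l [] 9)
  (d 3559)))
  (d 7388))))
  (s 18 (s 19 (l [] 9)
  (d 9028))
  (d 3339)))))))
  (s 10 (s 11 (l [] 5)
  (s 13 (m [2678] 1)
  (s 14 (s 15 (l [] 7)
  (s 16 (s 4 (s 0 (l [2930, 3711] 1)
  (s 9 (m [2154] 0)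
  (s 17 (l [] 8)
  (s 19 (m [1178] 8)
  (d 3847)))))
  (s 17 (l [] 8)
  (s 19 (m [1178] 8)
  (d 5279))))
  (s 19 (m [1178] 8)
  (d 8808))))
  (s 16 (s 17 (l [] 8)
  (s 19 (m [1178] 8)
  (d 6544)))
  (s 19 (m [1178] 8)
  (d 3419))))))
  (s 13 (m [2678] 1)
  (s 14 (s 15 (l [] 7)
  (s 16 (s 4 (m [1826] 10)
  (s 11 (m [1478] 5)
  (s 17 (l [] 8)
  (s 19 (s 0 (m [2930, 6011] 5)
  (s 18 (l [] 9)
  (d 7976)))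
  (d 5279)))))
  (s 19 (s 9 (s 0 (l [2930, 8632] 3)
  (s 4 (m [2154] 0)
  (s 18 (l [] 9)
  (d 4851))))
  (s 18 (l [] 9)
  (d 3339)))
  (d 8264))))
  (s 16 (s 11 (m [1478] 5)
  (s 17 (l [] 8)
  (s 19 (s 0 (m [2930, 558] 14)
  (s 9 (m [1102] 11)
  (s 15 (m [334] 13)
  (s 18 (l [] 9)
  (d 8040)))))
  (d 6544))))
  (s 19 (s 18 (l [] 9)
  (d 7228))
  (d 5139)))))))

open Cert in
def cert16 : Cert :=
  (s 11 (s 4 (s 0 (s 7 (l [8660] 1)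
  (s 10 (l [] 5)
  (s 13 (m [2826] 7)
  (s 14 (s 15 (l [] 7)
  (s 16 (l [1654] 1)
  (s 19 (l [1730, 3419] 2)
  (d 8264))))
  (s 16 (l [1654] 1)
  (s 19 (s 18 (l [] 9)
  (d 7228))
  (d 5139)))))))
  (s 10 (l [] 5)
  (s 12 (s 13 (l [] 6)
  (s 14 (m [2154] 0)
  (s 16 (l [1654] 1)
  (s 18 (m [1730, 4883] 6)
  (d 6488)))))
  (s 14 (m [2154] 0)
  (s 16 (l [1654] 1)
  (s 18 (s 19 (l [] 9)
  (d 7884))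
  (d 4759)))))))
  (s 10 (l [] 5)
  (s 13 (s 12 (l [] 6)
  (s 14 (s 15 (l [] 7)
  (s 16 (m [1478] 5)
  (s 18 (m [582] 16)
  (d 3323))))
  (s 16 (m [1478] 5)
  (s 18 (s 19 (l [] 9)
  (d 7440))
  (d 5047)))))
  (s 15 (s 14 (l [] 7)
  (s 17 (s 12 (s 0 (m [6616] 4)
  (s 16 (l [] 8)
  (s 18 (m [4883] 6)
  (d 3363))))
  (s 16 (l [] 8)
  (s 18 (s 19 (l [] 9)
  (d 7440))
  (d 5047))))
  (s 19 (s 12 (m [482] 17)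
  (s 16 (m [1478] 5)
  (s 18 (l [] 9)
  (d 5047))))
  (d 8016))))
  (s 16 (m [1478] 5)
  (s 18 (s 17 (s 7 (s 12 (l [4883] 3)
  (s 14 (m [434] 12)
  (s 19 (l [] 9)
  (d 7440))))
  (s 19 (l [] 9)
  (d 8264)))
  (s 19 (l [] 9)
  (d 4891)))
  (d 990)))))))
  (s 13 (s 12 (l [] 6)
  (s 14 (s 15 (l [] 7)
  (s 16 (s 17 (l [] 8)
  (s 18 (s 0 (l [2826, 4327] 6)
  (s 4 (m [2154] 0)
  (s 19 (l [] 9)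
  (d 3863))))
  (d 8792)))
  (s 18 (m [582] 16)
  (d 8320))))
  (s 17 (s 15 (s 4 (m [4771] 1)
  (s 16 (l [] 8)
  (s 18 (s 10 (m [4139] 4)
  (s 19 (l [] 9)
  (d 7440)))
  (d 8172))))
  (s 16 (l [] 8)
  (s 18 (m [358] 15)
  (d 8320))))
  (s 19 (s 18 (l [] 9)
  (d 8396))
  (d 5271)))))
  (s 14 (s 15 (l [] 7)
  (s 16 (s 4 (s 12 (l [2154, 3711] 1)
  (s 17 (l [] 8)
  (s 18 (l [1826, 6544] 2)
  (d 8792))))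
  (s 17 (l [] 8)
  (s 19 (s 10 (m [954, 7428] 13)
  (s 18 (l [] 9)
  (d 4335)))
  (d 1490))))
  (s 18 (s 19 (l [] 9)
  (d 5683))
  (d 6027))))
  (s 16 (s 17 (l [] 8)
  (s 19 (s 12 (m [558] 14)
  (s 18 (l [] 9)
  (d 8396)))
  (d 4595)))
  (s 19 (s 15 (s 0 (s 12 (m [482, 6616, 6584] 11)
  (s 17 (s 4 (m [6584] 11)
  (s 18 (l [] 9)
  (d 8172)))
  (s 18 (l [] 9)
  (d 8396))))
  (s 4 (s 10 (m [954, 4915] 0)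
  (s 18 (l [] 9)
  (d 6488)))
  (s 18 (l [] 9)
  (d 9076))))
  (s 18 (l [] 9)
  (d 6027)))
  (d 2110))))))

open Cert in
def cert17 : Cert :=
  (s 13 (s 12 (l [] 6)
  (s 15 (s 14 (l [] 7)
  (s 17 (s 0 (s 4 (l [4771] 0)
  (s 8 (m [2402] 4)
  (s 16 (l [] 8)
  (s 18 (s 10 (l [2826, 8028] 6)
  (s 19 (l [] 9)
  (d 7440)))
  (d 8172)))))
  (s 16 (l [] 8)
  (s 18 (s 7 (s 8 (l [1202, 8028] 6)
  (s 10 (l [8028] 6)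
  (s 19 (l [] 9)
  (d 7884))))
  (s 19 (l [] 9)
  (d 5535)))
  (d 2690))))
  (s 19 (s 8 (s 0 (l [2826, 6792] 0)
  (s 16 (s 4 (l [1826, 4779] 7)
  (s 18 (l [] 9)
  (d 5663)))
  (s 18 (l [] 9)
  (d 2690))))
  (s 18 (l [] 9)
  (d 8396)))
  (d 6992))))
  (s 16 (s 17 (l [] 8)
  (s 18 (s 19 (l [] 9)
  (d 6596))
  (d 3471)))
  (s 18 (s 17 (m [358] 15)
  (s 19 (l [] 9)
  (d 6596)))
  (d 5195)))))
  (s 15 (s 14 (l [] 7)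
  (s 16 (s 17 (l [] 8)
  (s 19 (m [334] 13)
  (d 7720)))
  (s 19 (s 18 (l [] 9)
  (d 4483))
  (d 4227))))
  (s 16 (s 12 (s 14 (s 0 (m [6011] 5)
  (s 17 (l [] 8)
  (s 19 (s 7 (s 4 (l [1826, 7428] 6)
  (s 10 (l [7428] 6)
  (s 18 (l [] 9)
  (d 7904))))
  (s 18 (l [] 9)
  (d 8040)))
  (d 6972))))
  (s 17 (l [] 8)
  (s 19 (m [558] 14)
  (d 7720))))
  (s 17 (l [] 8)
  (s 18 (s 19 (l [] 9)
  (d 6596))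
  (d 3471))))
  (s 18 (s 14 (s 8 (s 0 (s 12 (m [6832] 6)
  (s 17 (m [434] 12)
  (s 19 (l [] 9)
  (d 6596))))
  (s 4 (s 17 (m [434, 6816] 0)
  (s 19 (l [] 9)
  (d 6972)))
  (s 19 (l [] 9)
  (d 8476))))
  (s 19 (l [] 9)
  (d 5683)))
  (s 19 (l [] 9)
  (d 4227)))
  (d 2710)))))

open Cert in
def cert18 : Cert :=
  (s 10 (s 2 (s 0 (s 9 (l [7460] 1)
  (s 11 (l [] 5)
  (s 12 (s 13 (l [] 6)
  (s 15 (m [2226] 9)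
  (s 17 (l [1454] 1)
  (s 18 (l [1830, 3423] 1)
  (d 7264)))))
  (s 15 (m [2226] 9)
  (s 17 (l [1454] 1)
  (s 18 (s 19 (l [] 9)
  (d 7728))
  (d 4139)))))))
  (s 11 (l [] 5)
  (s 12 (m [2778] 0)
  (s 14 (s 15 (l [] 7)
  (s 17 (l [1454] 1)
  (s 19 (m [1830, 4759] 8)
  (d 6988))))
  (s 17 (l [1454] 1)
  (s 19 (s 18 (l [] 9)
  (d 8384))
  (d 5259)))))))
  (s 11 (l [] 5)
  (s 13 (s 12 (l [] 6)
  (s 14 (s 15 (l [] 7)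
  (s 16 (s 0 (m [6596] 2)
  (s 17 (l [] 8)
  (s 19 (m [4759] 8)
  (d 3863))))
  (s 18 (m [582] 16)
  (d 9016))))
  (s 17 (m [1454] 3)
  (s 19 (s 18 (l [] 9)
  (d 8940))
  (d 3547)))))
  (s 15 (s 14 (l [] 7)
  (s 17 (m [1454] 3)
  (s 19 (s 12 (m [482] 17)
  (s 18 (l [] 9)
  (d 8940)))
  (d 3823))))
  (s 17 (m [1454] 3)
  (s 19 (s 16 (s 9 (s 12 (l [558, 4759] 4)
  (s 14 (l [4759] 4)
  (s 18 (l [] 9)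
  (d 8940))))
  (s 18 (l [] 9)
  (d 7264)))
  (s 18 (l [] 9)
  (d 5891)))
  (d 1490)))))))
  (s 12 (s 13 (l [] 6)
  (s 15 (s 14 (l [] 7)
  (s 17 (s 16 (l [] 8)
  (s 19 (s 0 (l [2226, 5527] 6)
  (s 2 (m [2778] 0)
  (s 18 (l [] 9)
  (d 3363))))
  (d 6792)))
  (s 19 (m [482] 17)
  (d 7320))))
  (s 17 (s 2 (s 14 (l [2778, 5511] 1)
  (s 16 (l [] 8)
  (s 19 (l [1726, 6548] 1)
  (d 6792))))
  (s 16 (l [] 8)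
  (s 18 (s 11 (m [978, 7304] 15)
  (s 19 (l [] 9)
  (d 5835)))
  (d 990))))
  (s 19 (s 18 (l [] 9)
  (d 3683))
  (d 5527)))))
  (s 15 (s 14 (l [] 7)
  (s 16 (s 13 (s 2 (m [4891] 1)
  (s 17 (l [] 8)
  (s 19 (s 11 (m [4263] 2)
  (s 18 (l [] 9)
  (d 8940)))
  (d 6672))))
  (s 17 (l [] 8)
  (s 19 (m [334] 13)
  (d 7320))))
  (s 18 (s 19 (l [] 9)
  (d 7896))
  (d 4771))))
  (s 17 (s 16 (l [] 8)
  (s 18 (s 14 (m [434] 12)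
  (s 19 (l [] 9)
  (d 7896)))
  (d 4095)))
  (s 18 (s 13 (s 0 (s 14 (m [582, 6596, 6608] 10)
  (s 16 (s 2 (m [6608] 10)
  (s 19 (l [] 9)
  (d 6672)))
  (s 19 (l [] 9)
  (d 7896))))
  (s 2 (s 11 (m [978, 4795] 0)
  (s 19 (l [] 9)
  (d 6988)))
  (s 19 (l [] 9)
  (d 8076))))
  (s 19 (l [] 9)
  (d 5527)))
  (d 1110))))))

open Cert in
def cert19 : Cert :=
  (s 11 (s 0 (s 2 (s 6 (l [7440] 0)
  (s 10 (l [] 5)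
  (s 12 (s 13 (l [] 6)
  (s 15 (l [2054] 0)
  (s 17 (l [2430, 5511] 1)
  (s 18 (m [1054] 6)
  (d 6808)))))
  (s 15 (l [2054] 0)
  (s 17 (s 16 (l [] 8)
  (s 18 (m [1054] 6)
  (d 7544)))
  (s 18 (m [1054] 6)
  (d 4419)))))))
  (s 10 (l [] 5)
  (s 13 (s 6 (m [2902] 2)
  (s 12 (l [] 6)
  (s 15 (l [2054] 0)
  (s 17 (m [2430, 486, 5147] 7)
  (s 18 (m [1054] 6)
  (d 4419))))))
  (s 15 (l [2054] 0)
  (s 16 (s 17 (l [] 8)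
  (s 18 (l [2430, 3559] 4)
  (d 7388)))
  (s 18 (s 19 (l [] 9)
  (d 8184))
  (d 5059)))))))
  (s 10 (l [] 5)
  (s 12 (s 13 (l [] 6)
  (s 15 (m [2054] 1)
  (s 16 (s 2 (s 14 (m [6696] 0)
  (s 17 (l [] 8)
  (s 19 (m [558] 14)
  (d 8816))))
  (s 17 (l [] 8)
  (s 18 (m [1054, 7388] 2)
  (d 4263))))
  (s 18 (s 19 (l [] 9)
  (d 9040))
  (d 3347)))))
  (s 15 (m [2054] 1)
  (s 17 (s 16 (l [] 8)
  (s 18 (s 13 (m [358] 15)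
  (s 19 (l [] 9)
  (d 9040)))
  (d 4023)))
  (s 18 (s 14 (s 13 (l [582, 3559] 4)
  (s 16 (l [3559] 4)
  (s 19 (l [] 9)
  (d 9040))))
  (s 19 (l [] 9)
  (d 5691)))
  (d 1790)))))))
  (s 13 (s 12 (l [] 6)
  (s 15 (m [2054] 1)
  (s 17 (s 0 (m [2430, 486, 5147] 7)
  (s 10 (m [1454] 3)
  (s 16 (l [] 8)
  (s 18 (m [358] 15)
  (d 4023)))))
  (s 19 (s 6 (s 0 (l [2430, 3547] 0)
  (s 10 (s 2 (l [1830, 6808] 3)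
  (s 18 (l [] 9)
  (d 5551)))
  (s 18 (l [] 9)
  (d 1790))))
  (s 18 (l [] 9)
  (d 4139)))
  (d 6964)))))
  (s 15 (m [2054] 1)
  (s 17 (s 2 (m [1726] 11)
  (s 16 (l [] 8)
  (s 19 (s 10 (m [1454] 3)
  (s 18 (l [] 9)
  (d 5059)))
  (d 8888))))
  (s 19 (s 18 (l [] 9)
  (d 8028))
  (d 3839))))))

open Cert in
def cert20 : Cert :=
  (s 13 (s 12 (l [] 6)
  (s 15 (s 14 (l [] 7)
  (s 16 (s 0 (s 2 (l [4891] 0)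
  (s 6 (m [2902] 2)
  (s 17 (l [] 8)
  (s 19 (s 11 (l [2226, 7904] 7)
  (s 18 (l [] 9)
  (d 8940)))
  (d 6672)))))
  (s 17 (l [] 8)
  (s 19 (s 9 (s 6 (l [1102, 7904] 7)
  (s 11 (l [7904] 7)
  (s 18 (l [] 9)
  (d 8384))))
  (s 18 (l [] 9)
  (d 6035)))
  (d 1190))))
  (s 18 (s 6 (s 0 (l [2226, 6672] 0)
  (s 17 (s 2 (l [1726, 4903] 6)
  (s 19 (l [] 9)
  (d 3663)))
  (s 19 (l [] 9)
  (d 1190))))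
  (s 19 (l [] 9)
  (d 7896)))
  (d 6492))))
  (s 17 (s 16 (l [] 8)
  (s 18 (m [358] 15)
  (d 7220)))
  (s 18 (s 19 (l [] 9)
  (d 3483))
  (d 5227)))))
  (s 15 (s 14 (l [] 7)
  (s 17 (s 16 (l [] 8)
  (s 19 (s 18 (l [] 9)
  (d 7596))
  (d 4471)))
  (s 19 (s 16 (m [334] 13)
  (s 18 (l [] 9)
  (d 7596)))
  (d 4195))))
  (s 17 (s 14 (s 12 (s 0 (m [5511] 3)
  (s 16 (l [] 8)
  (s 18 (s 9 (s 2 (l [1726, 7304] 7)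
  (s 11 (l [7304] 7)
  (s 19 (l [] 9)
  (d 8404))))
  (s 19 (l [] 9)
  (d 9040)))
  (d 6472))))
  (s 16 (l [] 8)
  (s 18 (m [434] 12)
  (d 7220))))
  (s 16 (l [] 8)
  (s 19 (s 18 (l [] 9)
  (d 7596))
  (d 4471))))
  (s 19 (s 12 (s 6 (s 0 (s 14 (m [6732] 8)
  (s 16 (m [558] 14)
  (s 18 (l [] 9)
  (d 7596))))
  (s 2 (s 16 (m [558, 6696] 0)
  (s 18 (l [] 9)
  (d 6472)))
  (s 18 (l [] 9)
  (d 7976))))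
  (s 18 (l [] 9)
  (d 3683)))
  (s 18 (l [] 9)
  (d 5227)))
  (d 1210)))))

open Cert in
def cert21 : Cert :=
  (s 7 (s 6 (l [] 3)
  (s 8 (s 9 (l [] 4)
  (s 11 (s 10 (l [] 5)
  (s 12 (s 13 (l [] 6)
  (s 15 (m [2054] 1)
  (s 17 (m [1110, 6548] 3)
  (s 18 (l [1054] 3)
  (d 6808)))))
  (s 15 (m [2054] 1)
  (s 17 (s 16 (l [] 8)
  (s 18 (l [1054] 3)
  (d 7544)))
  (s 18 (l [1054] 3)
  (d 4419))))))
  (s 12 (s 13 (l [] 6)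
  (s 15 (m [2054] 1)
  (s 17 (s 2 (m [1726] 11)
  (s 10 (m [1454] 3)
  (s 16 (l [] 8)
  (s 18 (m [1202] 10)
  (d 4779)))))
  (s 18 (s 0 (l [2430, 6832] 3)
  (s 2 (m [2778] 0)
  (s 19 (l [] 9)
  (d 5351))))
  (d 7264)))))
  (s 15 (m [2054] 1)
  (s 17 (s 10 (m [1454] 3)
  (s 16 (l [] 8)
  (s 18 (m [1202] 10)
  (d 7544))))
  (s 18 (s 19 (l [] 9)
  (d 7728))
  (d 4139)))))))
  cert18))
  (s 8 (s 9 (l [] 4)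
  cert19)
  (s 10 (s 11 (l [] 5)
  (s 13 (s 12 (l [] 6)
  (s 15 (s 0 (s 2 (l [1830, 4891] 0)
  (s 6 (m [2902] 2)
  (s 14 (l [] 7)
  (s 17 (m [1454] 3)
  (s 19 (m [2226, 954] 7)
  (d 3547))))))
  (s 14 (l [] 7)
  (s 17 (m [1454] 3)
  (s 19 (s 6 (m [1178] 8)
  (s 18 (l [] 9)
  (d 8384)))
  (d 4579)))))
  (s 17 (m [1454] 3)
  (s 19 (s 6 (m [1178] 8)
  (s 9 (m [954] 7)
  (s 18 (l [] 9)
  (d 4139))))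
  (d 6608)))))
  (s 15 (s 14 (l [] 7)
  (s 17 (m [1454] 3)
  (s 19 (s 2 (m [1830, 334] 13)
  (s 6 (m [1178] 8)
  (s 12 (m [482] 17)
  (s 18 (l [] 9)
  (d 8940)))))
  (d 7644))))
  (s 17 (m [1454] 3)
  (s 19 (s 9 (m [954] 7)
  (s 18 (l [] 9)
  (d 8028)))
  (d 4519))))))
  cert20)))

open Cert in
def cert22 : Cert :=
  (s 12 (s 13 (l [] 6)
  (s 14 (s 15 (l [] 7)
  (s 17 (s 16 (l [] 8)
  (s 19 (s 18 (l [] 9)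
  (d 9152))
  (d 8636)))
  (s 18 (s 16 (s 10 (m [3423] 3)
  (s 19 (l [] 9)
  (d 8652)))
  (s 19 (l [] 9)
  (d 8636)))
  (d 8680))))
  (s 16 (s 2 (s 15 (s 4 (l [2778, 8076] 6)
  (s 10 (l [586, 3423] 1)
  (s 17 (l [] 8)
  (s 19 (l [334] 6)
  (d 7320)))))
  (s 17 (l [] 8)
  (s 18 (s 10 (l [3423] 1)
  (s 19 (l [] 9)
  (d 8652)))
  (d 8680))))
  (s 17 (l [] 8)
  (s 19 (m [558] 14)
  (d 4595))))
  (s 19 (s 15 (s 0 (l [5527] 6)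
  (s 2 (m [2778] 0)
  (s 4 (m [482, 6584] 11)
  (s 18 (l [] 9)
  (d 9076)))))
  (s 18 (l [] 9)
  (d 9152)))
  (d 5511)))))
  (s 14 (s 15 (l [] 7)
  (s 17 (s 2 (s 13 (m [486, 5763] 11)
  (s 16 (l [] 8)
  (s 19 (s 18 (l [] 9)
  (d 9152))
  (d 8636))))
  (s 16 (l [] 8)
  (s 18 (m [434] 12)
  (d 8320))))
  (s 18 (s 13 (s 0 (l [4327] 6)
  (s 4 (m [2154] 0)
  (s 19 (l [] 9)
  (d 6988))))
  (s 16 (s 10 (m [6544] 5)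
  (s 19 (l [] 9)
  (d 8652)))
  (s 19 (l [] 9)
  (d 8636))))
  (d 5667))))
  (s 17 (s 16 (l [] 8)
  (s 19 (s 10 (s 2 (s 13 (l [3663] 1)
  (s 15 (l [1778, 7884] 4)
  (s 18 (l [] 9)
  (d 9152))))
  (s 15 (s 4 (l [7884] 4)
  (s 18 (l [] 9)
  (d 8172)))
  (s 18 (l [] 9)
  (d 8320))))
  (s 18 (l [] 9)
  (d 1730)))
  (d 4955)))
  (s 19 (s 18 (l [] 9)
  (d 5803))
  (d 2230)))))

open Cert in
def cert23 : Cert :=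
  (s 8 (s 2 (s 4 (s 0 (l [5555] 3)
  (s 10 (l [] 5)
  (s 12 (m [2778] 0)
  (s 14 (s 15 (l [] 7)
  (s 16 (l [1110, 6664] 2)
  (s 18 (l [1054] 3)
  (d 6444))))
  (s 16 (s 17 (l [] 8)
  (s 18 (l [1054] 3)
  (d 9008)))
  (s 18 (l [1054] 3)
  (d 3319)))))))
  (s 10 (l [] 5)
  (s 12 (s 13 (l [] 6)
  (s 15 (m [2778, 2402] 4)
  (s 17 (l [1110, 6548] 1)
  (s 18 (l [1054] 3)
  (d 6808)))))
  (s 15 (s 0 (m [2402] 4)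
  (s 14 (l [] 7)
  (s 16 (m [1110, 334, 6792] 1)
  (s 18 (l [1054] 3)
  (d 3319)))))
  (s 17 (s 16 (l [] 8)
  (s 18 (l [1054] 3)
  (d 7544)))
  (s 18 (l [1054] 3)
  (d 4419)))))))
  (s 10 (l [] 5)
  (s 13 (s 12 (l [] 6)
  (s 15 (m [1110, 6792] 1)
  (s 16 (m [1110, 4263] 2)
  (s 18 (l [1054] 3)
  (d 7144)))))
  (s 15 (s 14 (l [] 7)
  (s 16 (m [1110, 334] 13)
  (s 18 (l [1054] 3)
  (d 7608))))
  (s 16 (s 4 (m [1654] 2)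
  (s 17 (l [] 8)
  (s 18 (l [1054] 3)
  (d 6808))))
  (s 18 (l [1054] 3)
  (d 4019)))))))
  (s 10 (l [] 5)
  (s 12 (s 13 (l [] 6)
  (s 14 (s 15 (l [] 7)
  (s 16 (s 17 (l [] 8)
  (s 18 (m [978] 9)
  (d 9136)))
  (s 19 (s 2 (s 17 (l [6548] 1)
  (s 18 (l [] 9)
  (d 9136)))
  (s 18 (l [] 9)
  (d 4019)))
  (d 9180))))
  (s 16 (s 4 (m [1654, 2778, 4855] 9)
  (s 17 (l [] 8)
  (s 19 (m [558] 14)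
  (d 7320))))
  (s 19 (s 2 (s 15 (l [482, 6548] 1)
  (s 17 (l [6548] 1)
  (s 18 (l [] 9)
  (d 9136))))
  (s 18 (l [] 9)
  (d 7608)))
  (d 3667)))))
  (s 14 (s 15 (l [] 7)
  (s 17 (s 4 (s 13 (m [486, 4519] 8)
  (s 16 (l [] 8)
  (s 19 (m [4519] 8)
  (d 9180))))
  (s 16 (l [] 8)
  (s 18 (m [978] 9)
  (d 4095))))
  (s 18 (m [978] 9)
  (d 6011))))
  (s 16 (s 17 (l [] 8)
  (s 18 (m [978] 9)
  (d 5955)))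
  (s 18 (m [978] 9)
  (d 1730)))))))

open Cert in
def cert24 : Cert :=
  (s 12 (s 13 (l [] 6)
  (s 15 (s 14 (l [] 7)
  (s 16 (s 2 (s 4 (l [2778, 8076] 6)
  (s 8 (m [2778, 2402] 4)
  (s 10 (l [586, 3423] 1)
  (s 17 (l [] 8)
  (s 19 (l [334] 6)
  (d 7320))))))
  (s 17 (l [] 8)
  (s 19 (l [334] 6)
  (d 7720))))
  (s 18 (s 19 (l [] 9)
  (d 7352))
  (d 6836))))
  (s 17 (s 16 (l [] 8)
  (s 18 (s 8 (s 14 (s 0 (l [6832] 3)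
  (s 2 (m [2778] 0)
  (s 4 (l [1202, 4179] 7)
  (s 19 (l [] 9)
  (d 8476)))))
  (s 19 (l [] 9)
  (d 7352)))
  (s 19 (l [] 9)
  (d 8636)))
  (d 3711)))
  (s 18 (s 2 (s 8 (s 14 (l [2778, 6832] 3)
  (s 16 (l [1202, 3423] 1)
  (s 19 (l [] 9)
  (d 7352))))
  (s 16 (s 10 (l [3423] 1)
  (s 19 (l [] 9)
  (d 8652)))
  (s 19 (l [] 9)
  (d 8636))))
  (s 14 (s 0 (m [9132] 9)
  (s 19 (l [] 9)
  (d 6972)))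
  (s 19 (l [] 9)
  (d 7720))))
  (d 5555)))))
  (s 15 (s 14 (l [] 7)
  (s 17 (s 16 (l [] 8)
  (s 19 (s 13 (s 8 (m [6792] 1)
  (s 10 (m [3663] 3)
  (s 18 (l [] 9)
  (d 1730))))
  (s 18 (l [] 9)
  (d 6836)))
  (d 8080)))
  (s 19 (s 8 (s 13 (m [6792] 1)
  (s 16 (m [334] 13)
  (s 18 (l [] 9)
  (d 6836))))
  (s 18 (l [] 9)
  (d 5803)))
  (d 3867))))
  (s 17 (s 2 (s 13 (s 14 (m [486, 5763] 11)
  (s 16 (l [] 8)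
  (s 19 (m [5763] 11)
  (d 8080))))
  (s 16 (l [] 8)
  (s 18 (s 14 (m [434] 12)
  (s 19 (l [] 9)
  (d 8080)))
  (d 3711))))
  (s 16 (l [] 8)
  (s 18 (s 14 (m [434] 12)
  (s 19 (l [] 9)
  (d 8080)))
  (d 5195))))
  (s 18 (s 19 (l [] 9)
  (d 4603))
  (d 2830)))))

open Cert in
def cert25 : Cert :=
  (s 6 (s 4 (s 2 (s 0 (l [4955] 3)
  (s 11 (l [] 5)
  (s 12 (s 13 (l [] 6)
  (s 14 (m [2154] 0)
  (s 17 (l [1210, 6788] 1)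
  (s 19 (l [954] 3)
  (d 6944)))))
  (s 14 (m [2154] 0)
  (s 17 (s 16 (l [] 8)
  (s 19 (l [954] 3)
  (d 8008)))
  (s 19 (l [954] 3)
  (d 3819)))))))
  (s 11 (l [] 5)
  (s 13 (s 0 (m [2902] 2)
  (s 12 (l [] 6)
  (s 14 (m [2154] 0)
  (s 17 (m [1210, 358, 6672] 1)
  (s 19 (l [954] 3)
  (d 3819))))))
  (s 14 (s 15 (l [] 7)
  (s 16 (l [1210, 6544] 2)
  (s 19 (l [954] 3)
  (d 8808))))
  (s 16 (s 17 (l [] 8)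
  (s 19 (l [954] 3)
  (d 6544)))
  (s 19 (l [954] 3)
  (d 3419)))))))
  (s 11 (l [] 5)
  (s 13 (s 12 (l [] 6)
  (s 15 (m [1210, 6672] 1)
  (s 17 (m [1210, 358] 15)
  (s 19 (l [954] 3)
  (d 6608)))))
  (s 15 (s 14 (l [] 7)
  (s 17 (m [1210, 4139] 4)
  (s 19 (l [954] 3)
  (d 7644))))
  (s 17 (s 2 (m [1778] 4)
  (s 16 (l [] 8)
  (s 19 (l [954] 3)
  (d 8808))))
  (s 19 (l [954] 3)
  (d 4519)))))))
  (s 11 (l [] 5)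
  (s 12 (s 13 (l [] 6)
  (s 14 (s 15 (l [] 7)
  (s 17 (s 16 (l [] 8)
  (s 19 (m [954] 7)
  (d 8636)))
  (s 18 (s 4 (s 16 (l [6544] 2)
  (s 19 (l [] 9)
  (d 8636)))
  (s 19 (l [] 9)
  (d 4519)))
  (d 8680))))
  (s 16 (s 2 (s 15 (m [586, 4523] 6)
  (s 17 (l [] 8)
  (s 18 (m [4523] 6)
  (d 8680))))
  (s 17 (l [] 8)
  (s 19 (m [954] 7)
  (d 4595))))
  (s 19 (m [954] 7)
  (d 5511)))))
  (s 14 (s 15 (l [] 7)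
  (s 17 (s 2 (m [1778, 2154, 4955] 7)
  (s 16 (l [] 8)
  (s 18 (m [434] 12)
  (d 8320))))
  (s 18 (s 4 (s 13 (l [582, 6544] 2)
  (s 16 (l [6544] 2)
  (s 19 (l [] 9)
  (d 8636))))
  (s 19 (l [] 9)
  (d 6608)))
  (d 5667))))
  (s 17 (s 16 (l [] 8)
  (s 19 (m [954] 7)
  (d 4955)))
  (s 19 (m [954] 7)
  (d 2230)))))))

open Cert in
def cert26 : Cert :=
  (s 13 (s 12 (l [] 6)
  (s 14 (s 15 (l [] 7)
  (s 17 (s 4 (s 2 (l [2154, 8676] 6)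
  (s 6 (m [2154, 2902] 2)
  (s 11 (l [486, 3419] 2)
  (s 16 (l [] 8)
  (s 18 (l [434] 6)
  (d 8320))))))
  (s 16 (l [] 8)
  (s 18 (l [434] 6)
  (d 7220))))
  (s 19 (s 18 (l [] 9)
  (d 8352))
  (d 8836))))
  (s 16 (s 17 (l [] 8)
  (s 18 (s 15 (s 6 (m [6672] 1)
  (s 11 (m [3539] 5)
  (s 19 (l [] 9)
  (d 2230))))
  (s 19 (l [] 9)
  (d 8836)))
  (d 9080)))
  (s 18 (s 6 (s 15 (m [6672] 1)
  (s 17 (m [358] 15)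
  (s 19 (l [] 9)
  (d 8836))))
  (s 19 (l [] 9)
  (d 4303)))
  (d 3367)))))
  (s 14 (s 15 (l [] 7)
  (s 16 (s 17 (l [] 8)
  (s 19 (s 6 (s 12 (s 0 (l [8632] 3)
  (s 2 (l [1102, 4303] 6)
  (s 4 (m [2154] 0)
  (s 18 (l [] 9)
  (d 7976)))))
  (s 18 (l [] 9)
  (d 8352)))
  (s 18 (l [] 9)
  (d 9136)))
  (d 5711)))
  (s 19 (s 4 (s 6 (s 12 (l [2154, 8632] 3)
  (s 17 (l [1102, 3419] 2)
  (s 18 (l [] 9)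
  (d 8352))))
  (s 17 (s 11 (l [3419] 2)
  (s 18 (l [] 9)
  (d 9152)))
  (s 18 (l [] 9)
  (d 9136))))
  (s 12 (s 0 (m [8632] 7)
  (s 18 (l [] 9)
  (d 6472)))
  (s 18 (l [] 9)
  (d 7220))))
  (d 6055))))
  (s 16 (s 4 (s 15 (s 12 (m [586, 5139] 10)
  (s 17 (l [] 8)
  (s 18 (m [5139] 10)
  (d 9080))))
  (s 17 (l [] 8)
  (s 19 (s 12 (m [558] 14)
  (s 18 (l [] 9)
  (d 9080)))
  (d 5711))))
  (s 17 (l [] 8)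
  (s 19 (s 12 (m [558] 14)
  (s 18 (l [] 9)
  (d 9080)))
  (d 4195))))
  (s 19 (s 18 (l [] 9)
  (d 4103))
  (d 1830)))))

open Cert in
def cert27 : Cert :=
  (s 13 (s 12 (l [] 6)
  (s 14 (s 15 (l [] 7)
  (s 17 (s 0 (s 4 (m [486, 4519, 5147] 7)
  (s 8 (m [486, 5147] 7)
  (s 16 (l [] 8)
  (s 18 (l [434] 6)
  (d 7220)))))
  (s 16 (l [] 8)
  (s 18 (l [434] 6)
  (d 4795))))
  (s 19 (s 8 (s 0 (m [5147] 7)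
  (s 4 (m [6964] 17)
  (s 18 (l [] 9)
  (d 1790))))
  (s 18 (l [] 9)
  (d 8352)))
  (d 8480))))
  (s 16 (s 17 (l [] 8)
  (s 18 (s 19 (l [] 9)
  (d 8952))
  (d 8236)))
  (s 18 (s 17 (s 6 (s 0 (l [2902, 4903] 6)
  (s 2 (l [4903] 6)
  (s 4 (m [358, 6684] 9)
  (s 19 (l [] 9)
  (d 9176)))))
  (s 8 (m [1054] 6)
  (s 19 (l [] 9)
  (d 4303))))
  (s 19 (l [] 9)
  (d 8952)))
  (d 5111)))))
  (s 15 (s 14 (l [] 7)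
  (s 16 (s 0 (s 12 (s 4 (l [1654, 8076] 6)
  (s 8 (m [2402] 4)
  (s 17 (l [] 8)
  (s 19 (l [334] 6)
  (d 4195)))))
  (s 17 (l [] 8)
  (s 18 (s 19 (l [] 9)
  (d 8952))
  (d 8236))))
  (s 17 (l [] 8)
  (s 19 (m [334] 13)
  (d 8420))))
  (s 18 (s 8 (s 0 (s 12 (l [1054, 3667] 0)
  (s 17 (l [2402, 6684] 4)
  (s 19 (l [] 9)
  (d 8952))))
  (s 17 (s 4 (l [6684] 4)
  (s 19 (l [] 9)
  (d 8272)))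
  (s 19 (l [] 9)
  (d 8420))))
  (s 19 (l [] 9)
  (d 1830)))
  (d 4855))))
  (s 16 (s 17 (l [] 8)
  (s 19 (s 6 (s 12 (s 2 (l [4303] 6)
  (s 4 (m [1654] 2)
  (s 18 (l [] 9)
  (d 7388))))
  (s 14 (s 8 (m [6664] 5)
  (s 18 (l [] 9)
  (d 8352)))
  (s 18 (l [] 9)
  (d 8236))))
  (s 8 (s 4 (s 12 (l [558, 6664] 2)
  (s 14 (l [6664] 2)
  (s 18 (l [] 9)
  (d 8236))))
  (s 18 (l [] 9)
  (d 6808)))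
  (s 18 (l [] 9)
  (d 9136))))
  (d 5767)))
  (s 18 (s 19 (l [] 9)
  (d 5903))
  (d 2430)))))

open Cert in
def cert28 : Cert :=
  (s 13 (s 12 (l [] 6)
  (s 15 (s 14 (l [] 7)
  (s 17 (s 16 (l [] 8)
  (s 19 (s 18 (l [] 9)
  (d 7452))
  (d 6736)))
  (s 19 (s 10 (s 16 (s 6 (s 0 (l [2902, 6808] 3)
  (s 2 (l [6808] 3)
  (s 4 (l [1178, 4779] 7)
  (s 18 (l [] 9)
  (d 8676)))))
  (s 8 (s 0 (l [2402, 4779] 7)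
  (s 4 (l [4779] 7)
  (s 18 (l [] 9)
  (d 8788))))
  (s 18 (l [] 9)
  (d 5803))))
  (s 18 (l [] 9)
  (d 7452)))
  (s 18 (l [] 9)
  (d 8236)))
  (d 3611))))
  (s 17 (s 0 (s 14 (s 2 (s 4 (l [8676] 6)
  (s 8 (m [486, 5147] 7)
  (s 10 (m [1778] 4)
  (s 16 (l [] 8)
  (s 18 (l [434] 6)
  (d 7220))))))
  (s 6 (m [2902] 2)
  (s 16 (l [] 8)
  (s 18 (l [434] 6)
  (d 5195)))))
  (s 16 (l [] 8)
  (s 19 (s 18 (l [] 9)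
  (d 7452))
  (d 6736))))
  (s 16 (l [] 8)
  (s 18 (m [358] 15)
  (d 7920))))
  (s 19 (s 6 (s 0 (s 10 (s 14 (l [1178, 3547] 0)
  (s 16 (l [2902, 6808] 3)
  (s 18 (l [] 9)
  (d 7452))))
  (s 14 (s 8 (l [3547] 0)
  (s 18 (l [] 9)
  (d 8352)))
  (s 18 (l [] 9)
  (d 8236))))
  (s 16 (s 2 (m [9008] 11)
  (s 18 (l [] 9)
  (d 7272)))
  (s 18 (l [] 9)
  (d 7920))))
  (s 18 (l [] 9)
  (d 2830)))
  (d 5355)))))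
  (s 15 (s 14 (l [] 7)
  (s 16 (s 0 (s 12 (s 2 (s 4 (l [8076] 6)
  (s 8 (m [2402] 4)
  (s 17 (l [] 8)
  (s 19 (l [334] 6)
  (d 7644)))))
  (s 6 (m [586, 5767] 9)
  (s 17 (l [] 8)
  (s 19 (l [334] 6)
  (d 7720)))))
  (s 17 (l [] 8)
  (s 19 (m [334] 13)
  (d 3611))))
  (s 17 (l [] 8)
  (s 19 (m [334] 13)
  (d 5295))))
  (s 18 (s 12 (s 6 (s 8 (m [3667] 1)
  (s 10 (s 2 (m [6988] 16)
  (s 19 (l [] 9)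
  (d 3419)))
  (s 19 (l [] 9)
  (d 1830))))
  (s 19 (l [] 9)
  (d 7352)))
  (s 19 (l [] 9)
  (d 6736)))
  (d 7980))))
  (s 17 (s 16 (l [] 8)
  (s 18 (s 10 (s 6 (s 12 (m [6788] 3)
  (s 14 (m [434] 12)
  (s 19 (l [] 9)
  (d 6736))))
  (s 8 (s 14 (s 2 (l [1778, 4179] 7)
  (s 4 (l [4179] 7)
  (s 19 (l [] 9)
  (d 8888))))
  (s 19 (l [] 9)
  (d 7352)))
  (s 19 (l [] 9)
  (d 8636))))
  (s 19 (l [] 9)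
  (d 5903)))
  (d 4267)))
  (s 19 (s 18 (l [] 9)
  (d 4903))
  (d 2930)))))

open Cert in
def cert29 : Cert :=
  (s 3 (s 2 (l [] 1)
  (s 5 (s 4 (l [] 2)
  (s 6 (s 7 (l [] 3)
  cert12)
  (s 8 (s 9 (l [] 4)
  cert13)
  cert14)))
  (s 6 (s 7 (l [] 3)
  cert15)
  (s 9 (s 8 (l [] 4)
  cert16)
  (s 11 (s 10 (l [] 5)
  (s 13 (s 12 (l [] 6)
  (s 15 (s 0 (s 4 (l [1730, 4771] 0)
  (s 8 (m [2402] 4)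
  (s 14 (l [] 7)
  (s 16 (m [1478] 5)
  (s 18 (m [2826, 978] 9)
  (d 5047))))))
  (s 14 (l [] 7)
  (s 16 (m [1478] 5)
  (s 18 (s 8 (m [1054] 6)
  (s 19 (l [] 9)
  (d 7884)))
  (d 4079)))))
  (s 16 (m [1478] 5)
  (s 18 (s 4 (m [1730, 358] 15)
  (s 8 (m [1054] 6)
  (s 14 (m [582] 16)
  (s 19 (l [] 9)
  (d 7440)))))
  (d 7144)))))
  (s 15 (s 14 (l [] 7)
  (s 16 (m [1478] 5)
  (s 18 (s 7 (m [978] 9)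
  (s 8 (m [1054] 6)
  (s 19 (l [] 9)
  (d 5139))))
  (d 7608))))
  (s 16 (m [1478] 5)
  (s 18 (s 7 (m [978] 9)
  (s 19 (l [] 9)
  (d 9028)))
  (d 4019))))))
  cert17)))))
  (s 5 (s 4 (l [] 2)
  cert21)
  (s 7 (s 6 (l [] 3)
  (s 9 (s 8 (l [] 4)
  (s 11 (s 10 (l [] 5)
  (s 12 (s 13 (l [] 6)
  (s 14 (s 15 (l [] 7)
  (s 16 (s 17 (l [] 8)
  (s 18 (s 19 (l [] 9)
  (d 8652))
  (d 9136)))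
  (s 19 (s 17 (m [6548] 3)
  (s 18 (l [] 9)
  (d 9136)))
  (d 9180))))
  (s 16 (s 4 (m [1654, 2778, 9176] 14)
  (s 17 (l [] 8)
  (s 19 (m [558] 14)
  (d 7320))))
  (s 19 (s 15 (m [482, 6548] 3)
  (s 17 (m [6548] 3)
  (s 18 (l [] 9)
  (d 9136))))
  (d 3667)))))
  (s 14 (s 15 (l [] 7)
  (s 17 (s 4 (m [2154, 8660, 8676] 12)
  (s 16 (l [] 8)
  (s 18 (m [434] 12)
  (d 4095))))
  (s 18 (s 13 (s 0 (l [4327] 6)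
  (s 2 (l [582, 8008] 3)
  (s 4 (m [2154] 0)
  (s 19 (l [] 9)
  (d 8076)))))
  (s 19 (l [] 9)
  (d 8652)))
  (d 6011))))
  (s 16 (s 17 (l [] 8)
  (s 18 (s 4 (s 13 (l [1654, 8008] 3)
  (s 15 (l [3539] 2)
  (s 19 (l [] 9)
  (d 8652))))
  (s 13 (s 2 (l [8008] 3)
  (s 19 (l [] 9)
  (d 6672)))
  (s 19 (l [] 9)
  (d 7320))))
  (d 5955)))
  (s 18 (s 19 (l [] 9)
  (d 4303))
  (d 1730))))))
  cert22))
  (s 11 cert23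
  cert24)))
  (s 9 (s 8 (l [] 4)
  (s 10 cert25
  cert26))
  (s 11 (s 10 (l [] 5)
  cert27)
  cert28)))))

open Cert in
def cert : Cert :=
  (s 1 (s 0 (l [] 0)
  (s 3 (s 2 (l [] 1)
  cert4)
  cert11))
  cert29)


theorem cert_ok : cert.check 0 0 = true := by decide +kernel

theorem ForcedSys.exists_code {F : Nat → Nat → Nat → Prop} (H : ForcedSys F) :
    ∃ code, ∀ n < 10, Good F code n :=
  H.check_sound cert 0 0 cert_ok (by simp [MaskInv]) (by simp)

end FiniteStep

section Geometry

/-- the linear functional in direction `θ` -/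
def dirF (θ : ℝ) : Plane →ₗ[ℝ] ℝ where
  toFun x := x 0 * Real.cos θ + x 1 * Real.sin θ
  map_add' x y := by simp; ring
  map_smul' c x := by simp; ring

theorem dirF_apply (θ : ℝ) (x : Plane) : dirF θ x = x 0 * Real.cos θ + x 1 * Real.sin θ := rfl

theorem dirF_ne_zero (θ : ℝ) : dirF θ ≠ 0 := by
  intro h
  have := congrArg (fun f => f (!₂[Real.cos θ, Real.sin θ])) h
  simp [dirF_apply] at this
  nlinarith [Real.sin_sq_add_cos_sq θ]

theorem dirF_add_int (θ : ℝ) (n : ℤ) : dirF (θ + n * (2 * Real.pi)) = dirF θ := by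
  ext x
  simp [dirF_apply, Real.cos_add_int_mul_two_pi, Real.sin_add_int_mul_two_pi]

theorem dirF_add (θ : ℝ) : dirF (θ + 2 * Real.pi) = dirF θ := by
  simpa using dirF_add_int θ 1

theorem dirF_cont (θ : ℝ) : Continuous (dirF θ) := by
  change Continuous fun x : Plane => x 0 * Real.cos θ + x 1 * Real.sin θ
  fun_prop

theorem det2_sin (p q : Plane) (α β : ℝ) : det2 p q * Real.sin (β - α) =
    dirF α p * dirF β q - dirF β p * dirF α q := by
  simp only [det2, dirF_apply, Real.sin_sub]
  ring

theorem dirF_sin (w : Plane) (α β γ : ℝ) : Real.sin (γ - α) * dirF β w =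
    Real.sin (γ - β) * dirF α w + Real.sin (β - α) * dirF γ w := by
  simp only [dirF_apply, Real.sin_sub]
  have h1 := Real.sin_sq_add_cos_sq β
  have h2 : Real.cos β ^ 2 = 1 - Real.sin β ^ 2 := by linarith
  ring_nf

theorem ori_two {α β γ : ℝ} {x y z : Plane} (h1 : 0 < Real.sin (β - α))
    (h2 : 0 < Real.sin (γ - β))
    (x1 : dirF α y ≤ dirF α x) (x2 : dirF α z ≤ dirF α x)
    (y1 : dirF β x ≤ dirF β y) (y2 : dirF β z ≤ dirF β y)
    (z1 : dirF γ x ≤ dirF γ z) (z2 : dirF γ y ≤ dirF γ z) :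
    0 ≤ det2 (y - x) (z - x) := by
  have e1 := det2_sin (x - z) (y - x) α β
  have e2 := det2_sin (z - y) (x - z) β γ
  have d1 : det2 (x - z) (y - x) = det2 (y - x) (z - x) := by simp [det2]; ring
  have d2 : det2 (z - y) (x - z) = det2 (y - x) (z - x) := by simp [det2]; ring
  rw [d1] at e1
  rw [d2] at e2
  simp only [map_sub] at e1 e2
  rcases le_total (dirF β z) (dirF β x) with h | h
  · have : 0 ≤ det2 (y - x) (z - x) * Real.sin (β - α) := by
      rw [e1]
      have := mul_nonneg (sub_nonneg.2 x2) (sub_nonneg.2 y1)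
      have := mul_nonneg (sub_nonneg.2 h) (sub_nonneg.2 x1)
      linarith
    exact nonneg_of_mul_nonneg_left this h1
  · have : 0 ≤ det2 (y - x) (z - x) * Real.sin (γ - β) := by
      rw [e2]
      have := mul_nonneg (sub_nonneg.2 y2) (sub_nonneg.2 z1)
      have := mul_nonneg (sub_nonneg.2 h) (sub_nonneg.2 z2)
      linarith
    exact nonneg_of_mul_nonneg_left this h2

theorem ori {α β γ : ℝ} {x y z : Plane} (h1 : α < β) (h2 : β < γ) (h3 : γ < α + 2 * Real.pi)
    (x1 : dirF α y ≤ dirF α x) (x2 : dirF α z ≤ dirF α x)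
    (y1 : dirF β x ≤ dirF β y) (y2 : dirF β z ≤ dirF β y)
    (z1 : dirF γ x ≤ dirF γ z) (z2 : dirF γ y ≤ dirF γ z) :
    0 ≤ det2 (y - x) (z - x) := by
  by_cases g1 : β - α < Real.pi
  · have s1 : 0 < Real.sin (β - α) := Real.sin_pos_of_pos_of_lt_pi (by linarith) g1
    by_cases g2 : γ - β < Real.pi
    · exact ori_two s1 (Real.sin_pos_of_pos_of_lt_pi (by linarith) g2) x1 x2 y1 y2 z1 z2
    · have s3 : 0 < Real.sin (α + 2 * Real.pi - γ) :=
        Real.sin_pos_of_pos_of_lt_pi (by linarith) (by linarith)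
      have s1' : 0 < Real.sin (β - (α + 2 * Real.pi)) := by
        rw [← sub_sub, Real.sin_sub_two_pi]; exact s1
      have e : det2 (y - x) (z - x) = det2 (x - z) (y - z) := by simp [det2]; ring
      rw [e]
      exact ori_two s3 s1' z1 z2 (by rwa [dirF_add]) (by rwa [dirF_add]) y2 y1
  · have s2 : 0 < Real.sin (γ - β) := Real.sin_pos_of_pos_of_lt_pi (by linarith) (by linarith)
    have s3 : 0 < Real.sin (α + 2 * Real.pi - γ) :=
        Real.sin_pos_of_pos_of_lt_pi (by linarith) (by linarith)
    have e : det2 (y - x) (z - x) = det2 (z - y) (x - y) := by simp [det2]; ring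
    rw [e]
    exact ori_two s2 s3 y2 y1 z2 z1 (by rwa [dirF_add]) (by rwa [dirF_add])

theorem cone {ε β γ : ℝ} {w : Plane} (h1 : ε < β) (h2 : β < γ) (h3 : γ - ε < Real.pi)
    (w1 : dirF ε w ≤ 0) (w2 : dirF γ w ≤ 0) : dirF β w ≤ 0 := by
  have s1 : 0 < Real.sin (γ - ε) := Real.sin_pos_of_pos_of_lt_pi (by linarith) h3
  have s2 : 0 < Real.sin (γ - β) := Real.sin_pos_of_pos_of_lt_pi (by linarith) (by linarith)
  have s3 : 0 < Real.sin (β - ε) := Real.sin_pos_of_pos_of_lt_pi (by linarith) (by linarith)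
  have e := dirF_sin w ε β γ
  have a1 := mul_nonneg s2.le (neg_nonneg.2 w1)
  have a2 := mul_nonneg s3.le (neg_nonneg.2 w2)
  by_contra h
  have := mul_pos s1 (not_le.1 h)
  linarith

/-- one point cannot beat at two directions points which win in between on both sides -/
theorem four_dirs {ε β γ δ : ℝ} (h1 : ε < β) (h2 : β < γ) (h3 : γ < δ)
    (h4 : δ < ε + 2 * Real.pi) {a b c : Plane} (e1 : dirF ε b < dirF ε a)
    (e2 : dirF ε c < dirF ε a) (g1 : dirF γ b ≤ dirF γ a) (g2 : dirF γ c ≤ dirF γ a)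
    (b1 : dirF β a < dirF β b) (d1 : dirF δ a < dirF δ c) : False := by
  rcases lt_trichotomy (γ - ε) Real.pi with h | h | h
  · have := cone (w := b - a) h1 h2 h (by simp [e1.le]) (by simp [g1])
    simp at this
    linarith
  · have hγ : γ = ε + Real.pi := by linarith
    subst hγ
    simp only [dirF_apply, Real.cos_add_pi, Real.sin_add_pi] at *
    linarith
  · have := cone (w := c - a) h3 h4 (by linarith) (by simp [g2]) (by rw [dirF_add]; simp [e2.le])
    simp at this
    linarith

theorem exists_smul_of_det2 {u v : Plane} (h : det2 u v = 0) (hu : u ≠ 0) :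
    ∃ s : ℝ, v = s • u := by
  have h' : u 0 * v 1 = u 1 * v 0 := by unfold det2 at h; linarith
  by_cases h0 : u 0 = 0
  · have h1 : u 1 ≠ 0 := by
      intro h1; apply hu; ext i; fin_cases i <;> simp [h0, h1]
    refine ⟨v 1 / u 1, ?_⟩
    have : v 0 = 0 := by
      rw [h0] at h'; simpa [h1] using h'.symm
    ext i; fin_cases i <;> simp [h0, this, h1]
  · refine ⟨v 0 / u 0, ?_⟩
    ext i; fin_cases i
    · simp [h0]
    · simp only [Fin.mk_one, PiLp.smul_apply, smul_eq_mul]; field_simp; linarith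

theorem crossing_core {A B : Set Plane} (hA : Convex ℝ A) {ε β γ δ : ℝ} (h1 : ε < β)
    (h2 : β < γ) (h3 : γ < δ) (h4 : δ < ε + 2 * Real.pi) {a₁ a₂ b₁ b₂ : Plane}
    (ha₁ : a₁ ∈ A) (ha₂ : a₂ ∈ A) (hb₁ : b₁ ∈ B) (hb₂ : b₂ ∈ B)
    (ea : ∀ x ∈ A, dirF ε x ≤ dirF ε a₁) (eb : ∀ x ∈ B, dirF ε x < dirF ε a₁)
    (ga : ∀ x ∈ A, dirF γ x ≤ dirF γ a₂) (gb : ∀ x ∈ B, dirF γ x ≤ dirF γ a₂)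
    (ba : ∀ x ∈ A, dirF β x < dirF β b₁) (bb : ∀ x ∈ B, dirF β x ≤ dirF β b₁)
    (da : ∀ x ∈ A, dirF δ x < dirF δ b₂) (db : ∀ x ∈ B, dirF δ x ≤ dirF δ b₂)
    (hc : IsPreconnected (B \ A)) : False := by
  have hlt : dirF γ a₁ < dirF γ a₂ := by
    by_contra h
    rw [not_lt] at h
    exact four_dirs h1 h2 h3 h4 (eb _ hb₁) (eb _ hb₂) ((gb _ hb₁).trans h) ((gb _ hb₂).trans h)
      (ba _ ha₁) (da _ ha₁)
  have hb₁A : b₁ ∉ A := fun h => lt_irrefl _ (ba _ h)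
  have hb₂A : b₂ ∉ A := fun h => lt_irrefl _ (da _ h)
  have n1 : det2 (a₂ - a₁) (b₁ - a₁) ≤ 0 := by
    have := ori h1 h2 (h3.trans h4) (ea _ ha₂ |> fun _ => (eb _ hb₁).le) (ea _ ha₂)
      (ba _ ha₁).le (ba _ ha₂).le (ga _ ha₁) (gb _ hb₁)
    have e : det2 (a₂ - a₁) (b₁ - a₁) = - det2 (b₁ - a₁) (a₂ - a₁) := by simp [det2]; ring
    linarith
  have n2 : 0 ≤ det2 (a₂ - a₁) (b₂ - a₁) :=
    ori (h1.trans h2) h3 h4 (ea _ ha₂) (eb _ hb₂).le (ga _ ha₁) (gb _ hb₂) (da _ ha₁).le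
      (da _ ha₂).le
  have hcont : Continuous fun x : Plane => det2 (a₂ - a₁) (x - a₁) := by
    simp only [det2, PiLp.sub_apply]
    fun_prop
  obtain ⟨x, ⟨hxB, hxA⟩, hx⟩ := hc.intermediate_value ⟨hb₁, hb₁A⟩ ⟨hb₂, hb₂A⟩
    hcont.continuousOn ⟨n1, n2⟩
  have hne : a₂ - a₁ ≠ 0 := by
    intro h
    rw [sub_eq_zero.1 h] at hlt
    exact lt_irrefl _ hlt
  obtain ⟨s, hs⟩ := exists_smul_of_det2 hx hne
  have hxs : x = a₁ + s • (a₂ - a₁) := by rw [← hs]; abel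
  have e1 := eb x hxB
  have e2 := ea _ ha₂
  have e3 := gb x hxB
  rw [hxs] at e1 e3
  simp only [map_add, map_smul, map_sub, smul_eq_mul] at e1 e3
  have hs0 : 0 ≤ s := by
    by_contra h
    rw [not_le] at h
    nlinarith
  have hs1 : s ≤ 1 := by
    by_contra h
    rw [not_le] at h
    nlinarith
  apply hxA
  rw [hxs]
  exact hA.add_smul_sub_mem ha₁ ha₂ ⟨hs0, hs1⟩

/-- three tops in convex position are not collinear -/
theorem collinear_tie {α β γ : ℝ} {x y z : Plane} (hxy : x ≠ y) (hxz : x ≠ z) (hyz : y ≠ z)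
    (x1 : dirF α y ≤ dirF α x) (x2 : dirF α z ≤ dirF α x)
    (y1 : dirF β x ≤ dirF β y) (y2 : dirF β z ≤ dirF β y)
    (z1 : dirF γ x ≤ dirF γ z) (z2 : dirF γ y ≤ dirF γ z)
    (hd : det2 (y - x) (z - x) = 0) :
    (dirF α y = dirF α x ∧ dirF α z = dirF α x) ∨ (dirF β x = dirF β y ∧ dirF β z = dirF β y) ∨
    (dirF γ x = dirF γ z ∧ dirF γ y = dirF γ z) := by
  obtain ⟨s, hs⟩ := exists_smul_of_det2 hd (sub_ne_zero.2 hxy.symm)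
  have hz : z = x + s • (y - x) := by rw [← hs]; abel
  have hs0 : s ≠ 0 := by rintro rfl; apply hxz; simp [hz]
  have hs1 : s ≠ 1 := by rintro rfl; apply hyz; simp [hz]
  have e : ∀ θ, dirF θ z = dirF θ x + s * (dirF θ y - dirF θ x) := by
    intro θ; conv_lhs => rw [hz]
    simp
  have ea := e α
  have eb := e β
  have eg := e γ
  rcases lt_or_gt_of_ne hs0 with h | h
  · left
    have : dirF α y = dirF α x := by nlinarith
    rw [this] at ea
    exact ⟨this, by linarith⟩
  · right
    rcases lt_or_gt_of_ne hs1 with h' | h'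
    · right
      have : dirF γ y = dirF γ x := by nlinarith
      rw [this] at eg ⊢
      constructor <;> linarith
    · left
      have : dirF β y = dirF β x := by nlinarith
      rw [this] at eb ⊢
      exact ⟨rfl, by linarith⟩

theorem frontier_of_max {S : Set Plane} {θ : ℝ} {p : Plane} (hp : p ∈ S)
    (hmax : ∀ x ∈ S, dirF θ x ≤ dirF θ p) : p ∈ frontier (convexHull ℝ S) := by
  refine ⟨subset_closure (subset_convexHull ℝ S hp), fun hpint => ?_⟩
  have hle : convexHull ℝ S ⊆ {x | dirF θ x ≤ dirF θ p} :=
    convexHull_min hmax (convex_halfSpace_le (dirF θ).isLinear _)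
  have hc : Continuous fun t : ℝ => p + t • (!₂[Real.cos θ, Real.sin θ] : Plane) := by fun_prop
  have hmem : ∀ᶠ t : ℝ in nhds 0, p + t • (!₂[Real.cos θ, Real.sin θ] : Plane) ∈
      interior (convexHull ℝ S) := by
    apply hc.continuousAt.eventually_mem
    simpa using isOpen_interior.mem_nhds hpint
  obtain ⟨t, ht, ht0⟩ := ((hmem.filter_mono nhdsWithin_le_nhds).and
    (self_mem_nhdsWithin : Set.Ioi (0 : ℝ) ∈ nhdsWithin 0 (Set.Ioi 0))).exists
  have h := hle (interior_subset ht)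
  have ht0 : 0 < t := ht0
  simp only [Set.mem_ofPred_eq, map_add, map_smul, smul_eq_mul] at h
  have : dirF θ !₂[Real.cos θ, Real.sin θ] = 1 := by
    simp only [dirF_apply]; simp
    nlinarith [Real.sin_sq_add_cos_sq θ]
  rw [this] at h
  linarith

/-- every nonzero functional is a positive multiple of a direction -/
theorem exists_dir (f : Plane →L[ℝ] ℝ) : ∃ r : ℝ, 0 ≤ r ∧ ∃ θ : ℝ, ∀ x, f x = r * dirF θ x := by
  set z : ℂ := ⟨f (!₂[1, 0]), f (!₂[0, 1])⟩ with hz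
  refine ⟨‖z‖, norm_nonneg _, z.arg, fun x => ?_⟩
  have hx : x = x 0 • (!₂[1, 0] : Plane) + x 1 • (!₂[0, 1] : Plane) := by
    ext i; fin_cases i <;> simp
  have h1 : ‖z‖ * Real.cos z.arg = f (!₂[1, 0]) := Complex.norm_mul_cos_arg z
  have h2 : ‖z‖ * Real.sin z.arg = f (!₂[0, 1]) := Complex.norm_mul_sin_arg z
  conv_lhs => rw [hx]
  simp only [map_add, map_smul, smul_eq_mul, dirF_apply, ← h1, ← h2]
  ring

theorem isCompact_hull_union {A B : Set Plane} (hA : ConvexBody2 A) (hB : ConvexBody2 B) :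
    IsCompact (convexHull ℝ (A ∪ B)) := by
  rw [hA.2.2.convexHull_union hB.2.2 hA.1 hB.1]
  have : convexJoin ℝ A B = (fun q : ℝ × Plane × Plane => q.2.1 + q.1 • (q.2.2 - q.2.1)) ''
      (Set.Icc (0 : ℝ) 1 ×ˢ (A ×ˢ B)) := by
    ext x
    simp only [mem_convexJoin, segment_eq_image', Set.mem_image, Set.mem_prod, Prod.exists]
    constructor
    · rintro ⟨a, ha, b, hb, t, ht, rfl⟩
      exact ⟨t, a, b, ⟨ht, ha, hb⟩, rfl⟩
    · rintro ⟨t, a, b, ⟨ht, ha, hb⟩, rfl⟩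
      exact ⟨a, ha, b, hb, t, ht, rfl⟩
  rw [this]
  exact (isCompact_Icc.prod (hA.2.1.prod hB.2.1)).image (by fun_prop)

theorem exists_sep {A B C : Set Plane} (hB : ConvexBody2 B) (hC : ConvexBody2 C)
    (h : ¬ A ⊆ convexHull ℝ (B ∪ C)) : ∃ θ : ℝ, ∃ p ∈ A, (∀ x ∈ B, dirF θ x < dirF θ p) ∧
    ∀ x ∈ C, dirF θ x < dirF θ p := by
  obtain ⟨p, hp, hpn⟩ := Set.not_subset.1 h
  obtain ⟨f, u, h1, h2⟩ := geometric_hahn_banach_closed_point (convex_convexHull ℝ (B ∪ C))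
    (isCompact_hull_union hB hC).isClosed hpn
  obtain ⟨r, hr, θ, hf⟩ := exists_dir f
  have key : ∀ x ∈ B ∪ C, dirF θ x < dirF θ p := by
    intro x hx
    have := (h1 x (subset_convexHull ℝ _ hx)).trans h2
    rw [hf, hf] at this
    exact lt_of_mul_lt_mul_left this hr
  exact ⟨θ, p, hp, fun x hx => key x (.inl hx), fun x hx => key x (.inr hx)⟩

end Geometry

section Assembly

/-- `s θ` is a point of `A` extreme in direction `θ` -/
def IsSupp (A : Set Plane) (s : ℝ → Plane) : Prop :=
  ∀ θ, s θ ∈ A ∧ ∀ x ∈ A, dirF θ x ≤ dirF θ (s θ)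

theorem ConvexBody2.exists_supp {A : Set Plane} (hA : ConvexBody2 A) : ∃ s, IsSupp A s := by
  have : ∀ θ, ∃ p, p ∈ A ∧ ∀ x ∈ A, dirF θ x ≤ dirF θ p := fun θ => by
    obtain ⟨p, hp, hm⟩ := hA.2.1.exists_isMaxOn hA.1 (dirF_cont θ).continuousOn
    exact ⟨p, hp, hm⟩
  choose s hs using this
  exact ⟨s, hs⟩

theorem IsSupp.per {A : Set Plane} {s : ℝ → Plane} (hs : IsSupp A s) (θ : ℝ) (n : ℤ) :
    dirF θ (s (θ + n * (2 * Real.pi))) = dirF θ (s θ) := by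
  have h := (hs (θ + n * (2 * Real.pi))).2 _ (hs θ).1
  rw [dirF_add_int] at h
  exact le_antisymm ((hs θ).2 _ (hs _).1) h

theorem nx_core {A B : Set Plane} (hA : Convex ℝ A) {s t : ℝ → Plane} (hs : IsSupp A s)
    (ht : IsSupp B t) (hc : IsPreconnected (B \ A)) {α β γ δ ε : ℝ} (h1 : α < β) (h2 : β < γ)
    (h3 : γ < δ) (h4 : δ < α + 2 * Real.pi) (a1 : dirF α (t α) ≤ dirF α (s α))
    (b1 : dirF β (s β) < dirF β (t β)) (c1 : dirF γ (t γ) ≤ dirF γ (s γ))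
    (d1 : dirF δ (s δ) < dirF δ (t δ)) (e1 : dirF ε (t ε) < dirF ε (s ε)) : False := by
  obtain ⟨n, hn, -⟩ := existsUnique_add_zsmul_mem_Ico Real.two_pi_pos ε α
  simp only [zsmul_eq_mul] at hn
  replace e1 : dirF (ε + n * (2 * Real.pi)) (t (ε + n * (2 * Real.pi))) <
      dirF (ε + n * (2 * Real.pi)) (s (ε + n * (2 * Real.pi))) := by
    rw [dirF_add_int, hs.per, ht.per]; exact e1
  generalize ε + n * (2 * Real.pi) = ε' at hn e1
  obtain ⟨hn1, hn2⟩ := hn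
  have p1 : ∀ θ, dirF (θ + 2 * Real.pi) = dirF θ := dirF_add
  rcases lt_trichotomy ε' β with h | h | h
  · exact crossing_core hA h h2 h3 (by linarith) (hs ε').1 (hs γ).1 (ht β).1 (ht δ).1
      (hs ε').2 (fun x hx => ((ht ε').2 x hx).trans_lt e1) (hs γ).2
      (fun x hx => ((ht γ).2 x hx).trans c1)
      (fun x hx => ((hs β).2 x hx).trans_lt b1) (ht β).2
      (fun x hx => ((hs δ).2 x hx).trans_lt d1) (ht δ).2 hc
  · subst h; exact lt_asymm e1 b1
  rcases lt_trichotomy ε' δ with h' | h' | h'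
  · refine crossing_core hA (ε := ε') (β := δ) (γ := α + 2 * Real.pi) (δ := β + 2 * Real.pi)
      h' h4 (by linarith) (by linarith) (hs ε').1 (hs α).1 (ht δ).1 (ht β).1
      (hs ε').2 (fun x hx => ((ht ε').2 x hx).trans_lt e1) ?_ ?_
      (fun x hx => ((hs δ).2 x hx).trans_lt d1) (ht δ).2 ?_ ?_ hc
    · rw [p1]; exact (hs α).2
    · rw [p1]; exact fun x hx => ((ht α).2 x hx).trans a1
    · rw [p1]; exact fun x hx => ((hs β).2 x hx).trans_lt b1
    · rw [p1]; exact (ht β).2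
  · subst h'; exact lt_asymm e1 d1
  · have q : ∀ θ, dirF (θ - 2 * Real.pi) = dirF θ := fun θ => by
      rw [← p1 (θ - 2 * Real.pi), sub_add_cancel]
    refine crossing_core hA (ε := ε' - 2 * Real.pi) (by linarith) h2 h3 (by linarith)
      (hs ε').1 (hs γ).1 (ht β).1 (ht δ).1
      ?_ ?_ (hs γ).2
      (fun x hx => ((ht γ).2 x hx).trans c1)
      (fun x hx => ((hs β).2 x hx).trans_lt b1) (ht β).2
      (fun x hx => ((hs δ).2 x hx).trans_lt d1) (ht δ).2 hc
    · rw [q]; exact (hs ε').2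
    · rw [q]; exact fun x hx => ((ht ε').2 x hx).trans_lt e1

/-- the tie-broken order of the bodies in direction `θ` -/
def DirOrd (s : Fin 5 → ℝ → Plane) (θ : Set.Ico (0 : ℝ) (2 * Real.pi)) (i j : Fin 5) : Prop :=
  dirF θ.1 (s j θ.1) < dirF θ.1 (s i θ.1) ∨
    (dirF θ.1 (s j θ.1) = dirF θ.1 (s i θ.1) ∧ j < i)

theorem DirOrd.le {s : Fin 5 → ℝ → Plane} {θ : Set.Ico (0 : ℝ) (2 * Real.pi)} {i j : Fin 5}
    (h : DirOrd s θ i j) : dirF θ.1 (s j θ.1) ≤ dirF θ.1 (s i θ.1) :=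
  h.elim le_of_lt fun h => h.1.le

theorem DirOrd.lt {s : Fin 5 → ℝ → Plane} {θ : Set.Ico (0 : ℝ) (2 * Real.pi)} {i j : Fin 5}
    (h : DirOrd s θ i j) (hij : i < j) : dirF θ.1 (s j θ.1) < dirF θ.1 (s i θ.1) :=
  h.elim id fun h => absurd h.2 hij.asymm

theorem not_subset_of_gen {A : Fin 5 → Set Plane} (hinj : Function.Injective A)
    (hgen : GenPos (Set.range A)) {i j k : Fin 5} (hij : i ≠ j) (hjk : j ≠ k) (hik : i ≠ k) :
    ¬ A i ⊆ convexHull ℝ (A j ∪ A k) := by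
  intro hsub
  have nij := hinj.ne hij
  have njk := hinj.ne hjk
  have nik := hinj.ne hik
  refine hgen {A i, A j, A k} ?_ (Set.ncard_eq_three.2 ⟨_, _, _, nij, nik, njk, rfl⟩) (A i)
    (by simp) ?_
  · rintro x (rfl | rfl | rfl) <;> exact Set.mem_range_self _
  · have e : ({A i, A j, A k} : Set (Set Plane)) \ {A i} = {A j, A k} := by
      ext x
      simp only [Set.mem_sdiff, Set.mem_insert_iff, Set.mem_singleton_iff]
      constructor
      · tauto
      · rintro (rfl | rfl)
        · exact ⟨.inr (.inl rfl), nij.symm⟩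
        · exact ⟨.inr (.inr rfl), nik.symm⟩
    rw [e]
    simp only [Set.sUnion_insert, Set.sUnion_singleton]
    refine (convexHull_min ?_ (convex_convexHull ℝ _)).antisymm
      (convexHull_mono Set.subset_union_right)
    exact Set.union_subset hsub (subset_convexHull ℝ _)

theorem exists_top {A : Fin 5 → Set Plane} (hinj : Function.Injective A)
    (hbody : ∀ i, ConvexBody2 (A i)) (hgen : GenPos (Set.range A)) {s : Fin 5 → ℝ → Plane}
    (hs : ∀ i, IsSupp (A i) (s i)) {i j k : Fin 5} (hij : i ≠ j) (hjk : j ≠ k) (hik : i ≠ k) :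
    ∃ θ : Set.Ico (0 : ℝ) (2 * Real.pi), dirF θ.1 (s j θ.1) < dirF θ.1 (s i θ.1) ∧
      dirF θ.1 (s k θ.1) < dirF θ.1 (s i θ.1) := by
  obtain ⟨θ, p, hp, h1, h2⟩ := exists_sep (hbody j) (hbody k)
    (not_subset_of_gen hinj hgen hij hjk hik)
  obtain ⟨n, hn, -⟩ := existsUnique_add_zsmul_mem_Ico Real.two_pi_pos θ 0
  simp only [zsmul_eq_mul, zero_add] at hn
  refine ⟨⟨_, hn⟩, ?_, ?_⟩
  · simp only [dirF_add_int, (hs _).per]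
    exact (h1 _ ((hs j) θ).1).trans_le ((hs i θ).2 p hp)
  · simp only [dirF_add_int, (hs _).per]
    exact (h2 _ ((hs k) θ).1).trans_le ((hs i θ).2 p hp)

theorem ord_lsys {A : Fin 5 → Set Plane} (hinj : Function.Injective A)
    (hbody : ∀ i, ConvexBody2 (A i)) (hnc : ∀ i j, i ≠ j → NoncrossingPair (A i) (A j))
    (hgen : GenPos (Set.range A)) {s : Fin 5 → ℝ → Plane}
    (hs : ∀ i, IsSupp (A i) (s i)) : LSys (DirOrd s) where
  tot θ i j hij := by
    unfold DirOrd
    rcases lt_trichotomy (dirF θ.1 (s j θ.1)) (dirF θ.1 (s i θ.1)) with h | h | h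
    · exact .inl (.inl h)
    · rcases lt_or_gt_of_ne hij with h' | h'
      · exact .inr (.inr ⟨h.symm, h'⟩)
      · exact .inl (.inr ⟨h, h'⟩)
    · exact .inr (.inl h)
  asym θ i j h h' := by
    rcases h with h | h
    · exact absurd h'.le (not_le.2 h)
    · exact absurd (h'.lt h.2) h.1.not_gt
  tr θ i j k h h' := by
    rcases h with h | h
    · exact .inl (h'.le.trans_lt h)
    · rcases h' with h' | h'
      · exact .inl (h'.trans_eq h.1)
      · exact .inr ⟨h'.1.trans h.1, h'.2.trans h.2⟩
  gp i j k hij hjk hik := by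
    obtain ⟨θ, h1, h2⟩ := exists_top hinj hbody hgen hs hij hjk hik
    exact ⟨θ, .inl h1, .inl h2⟩
  nx i j x y z w h1 h2 h3 l1 l2 l3 l4 := by
    have hex : ∀ i j : Fin 5, i ≠ j → ∃ k, j ≠ k ∧ i ≠ k := by decide
    have hw : w.1 < x.1 + 2 * Real.pi := by have := w.2.2; have := x.2.1; linarith
    have hij : i ≠ j := by
      rintro rfl
      rcases l1 with h | h
      · exact lt_irrefl _ h
      · exact lt_irrefl _ h.2
    rcases lt_or_gt_of_ne hij with h | h
    · obtain ⟨k, hk1, hk2⟩ := hex j i hij.symm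
      obtain ⟨ε, hε, -⟩ := exists_top hinj hbody hgen hs hij.symm hk1 hk2
      have hp := (hs i).per x.1 1
      have hq := (hs j).per x.1 1
      simp only [Int.cast_one, one_mul] at hp hq
      exact nx_core (hbody j).2.2 (hs j) (hs i) (hnc i j hij).1.isPreconnected
        (α := y.1) (β := z.1) (γ := w.1) (δ := x.1 + 2 * Real.pi) (ε := ε.1) h2 h3 hw
        (by have : x.1 < y.1 := h1
            linarith) l2.le (l3.lt h) l4.le (by rw [dirF_add, hp, hq]; exact l1.lt h) hε
    · obtain ⟨k, hk1, hk2⟩ := hex i j hij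
      obtain ⟨ε, hε, -⟩ := exists_top hinj hbody hgen hs hij hk1 hk2
      exact nx_core (hbody i).2.2 (hs i) (hs j) (hnc i j hij).2.isPreconnected
        (α := x.1) (β := y.1) (γ := z.1) (δ := w.1) (ε := ε.1) h1 h2 h3 hw
        l1.le (l2.lt h) l3.le (l4.lt h) hε

theorem ord_ne {A : Fin 5 → Set Plane} {s : Fin 5 → ℝ → Plane}
    (hs : ∀ i, IsSupp (A i) (s i)) {i j : Fin 5} {x y : Set.Ico (0 : ℝ) (2 * Real.pi)}
    (h : DirOrd s x i j) (h' : DirOrd s y j i) : s i x.1 ≠ s j y.1 := by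
  intro e
  have hij : i ≠ j := by
    rintro rfl
    rcases h with h | h
    · exact lt_irrefl _ h
    · exact lt_irrefl _ h.2
  rcases lt_or_gt_of_ne hij with g | g
  · have h1 := h.lt g
    have h2 := (hs j x.1).2 _ (hs j y.1).1
    rw [← e] at h2
    linarith
  · have h1 := h'.lt g
    have h2 := (hs i y.1).2 _ (hs i x.1).1
    rw [e] at h2
    linarith

theorem no_tie {A : Fin 5 → Set Plane} (hinj : Function.Injective A)
    (hline : NoTripleTangentLine (Set.range A)) {i j k : Fin 5} (hij : i ≠ j)
    (hjk : j ≠ k) (hik : i ≠ k) {θ : ℝ} {p q r : Plane} (hp : p ∈ A i) (hq : q ∈ A j)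
    (hr : r ∈ A k) (mp : ∀ x ∈ A i, dirF θ x ≤ dirF θ p) (mq : ∀ x ∈ A j, dirF θ x ≤ dirF θ p)
    (mr : ∀ x ∈ A k, dirF θ x ≤ dirF θ p) (e1 : dirF θ q = dirF θ p)
    (e2 : dirF θ r = dirF θ p) : False :=
  hline (dirF θ) (dirF_ne_zero θ) (dirF θ p) (A i) ⟨i, rfl⟩ (A j) ⟨j, rfl⟩ (A k) ⟨k, rfl⟩
    (hinj.ne hij) (hinj.ne hjk) (hinj.ne hik)
    ⟨⟨⟨p, hp, rfl⟩, .inl mp⟩, ⟨⟨q, hq, e1⟩, .inl mq⟩, ⟨⟨r, hr, e2⟩, .inl mr⟩⟩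

theorem al_points {A : Fin 5 → Set Plane} (hinj : Function.Injective A)
    (hline : NoTripleTangentLine (Set.range A)) {s : Fin 5 → ℝ → Plane}
    (hs : ∀ i, IsSupp (A i) (s i)) {i j k : Fin 5} (hij : i ≠ j)
    (hjk : j ≠ k) (hik : i ≠ k) (h : AlX (DirOrd s) i j k) :
    ∃ a ∈ A i, ∃ b ∈ A j, ∃ c ∈ A k, 0 < det2 (b - a) (c - a) ∧
      ∀ S : Set Plane, S = A i ∪ A j ∪ A k → a ∈ frontier (convexHull ℝ S) ∧
        b ∈ frontier (convexHull ℝ S) ∧ c ∈ frontier (convexHull ℝ S) := by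
  obtain ⟨x, y, z, hc, ⟨x1, x2⟩, ⟨y1, y2⟩, ⟨z1, z2⟩⟩ := h
  have mi : ∀ {l m : Fin 5} {t : Set.Ico (0 : ℝ) (2 * Real.pi)}, DirOrd s t l m → ∀ u ∈ A m,
      dirF t.1 u ≤ dirF t.1 (s l t.1) := fun h u hu => ((hs _ _).2 u hu).trans h.le
  refine ⟨s i x.1, (hs i _).1, s j y.1, (hs j _).1, s k z.1, (hs k _).1, ?_, ?_⟩
  · have p1 := mi x1 _ (hs j y.1).1
    have p2 := mi x2 _ (hs k z.1).1
    have q1 := mi y1 _ (hs i x.1).1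
    have q2 := mi y2 _ (hs k z.1).1
    have r1 := mi z1 _ (hs i x.1).1
    have r2 := mi z2 _ (hs j y.1).1
    have hw : ∀ a b : Set.Ico (0 : ℝ) (2 * Real.pi), a.1 < b.1 + 2 * Real.pi := fun a b => by
      have := a.2.2; have := b.2.1; linarith
    have h0 : 0 ≤ det2 (s j y.1 - s i x.1) (s k z.1 - s i x.1) := by
      rcases hc with ⟨c1, c2⟩ | ⟨c1, c2⟩ | ⟨c1, c2⟩
      · exact ori (α := x.1) (β := y.1) (γ := z.1) c1 c2 (hw _ _) p1 p2 q1 q2 r1 r2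
      · have := ori (α := y.1) (β := z.1) (γ := x.1) c1 c2 (hw _ _) q2 q1 r2 r1 p1 p2
        convert this using 1
        simp [det2]; ring
      · have := ori (α := z.1) (β := x.1) (γ := y.1) c1 c2 (hw _ _) r1 r2 p2 p1 q2 q1
        convert this using 1
        simp [det2]; ring
    refine h0.lt_of_ne fun hd => ?_
    rcases collinear_tie (ord_ne hs x1 y1) (ord_ne hs x2 z1) (ord_ne hs y2 z2)
      p1 p2 q1 q2 r1 r2 hd.symm with ⟨e1, e2⟩ | ⟨e1, e2⟩ | ⟨e1, e2⟩
    · exact no_tie hinj hline hij hjk hik (hs i _).1 (hs j _).1 (hs k _).1 (hs i _).2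
        (mi x1) (mi x2) e1 e2
    · exact no_tie hinj hline hij.symm hik hjk (hs j _).1 (hs i _).1 (hs k _).1 (hs j _).2
        (mi y1) (mi y2) e1 e2
    · exact no_tie hinj hline hik.symm hij hjk.symm (hs k _).1 (hs i _).1 (hs j _).1 (hs k _).2
        (mi z1) (mi z2) e1 e2
  · rintro S rfl
    refine ⟨frontier_of_max (θ := x.1) (.inl (.inl (hs i _).1)) ?_,
      frontier_of_max (θ := y.1) (.inl (.inr (hs j _).1)) ?_,
      frontier_of_max (θ := z.1) (.inr (hs k _).1) ?_⟩
    · rintro u ((hu | hu) | hu)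
      exacts [(hs i _).2 u hu, mi x1 u hu, mi x2 u hu]
    · rintro u ((hu | hu) | hu)
      exacts [mi y1 u hu, (hs j _).2 u hu, mi y2 u hu]
    · rintro u ((hu | hu) | hu)
      exacts [mi z1 u hu, mi z2 u hu, (hs k _).2 u hu]

theorem ccw_of_al {A : Fin 5 → Set Plane} (hinj : Function.Injective A)
    (hline : NoTripleTangentLine (Set.range A)) {s : Fin 5 → ℝ → Plane}
    (hs : ∀ i, IsSupp (A i) (s i)) {i j k : Fin 5} (hij : i ≠ j)
    (hjk : j ≠ k) (hik : i ≠ k) (h : AlX (DirOrd s) i j k) : CCWOriented (A i) (A j) (A k) := by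
  obtain ⟨a, ha, b, hb, c, hc, hd, hf⟩ := al_points hinj hline hs hij hjk hik h
  obtain ⟨f1, f2, f3⟩ := hf _ rfl
  exact ⟨a, ⟨ha, f1⟩, b, ⟨hb, f2⟩, c, ⟨hc, f3⟩, hd⟩

theorem cw_of_al {A : Fin 5 → Set Plane} (hinj : Function.Injective A)
    (hline : NoTripleTangentLine (Set.range A)) {s : Fin 5 → ℝ → Plane}
    (hs : ∀ i, IsSupp (A i) (s i)) {i j k : Fin 5} (hij : i ≠ j)
    (hjk : j ≠ k) (hik : i ≠ k) (h : AlX (DirOrd s) i k j) : CWOriented (A i) (A j) (A k) := by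
  obtain ⟨a, ha, b, hb, c, hc, hd, hf⟩ := al_points hinj hline hs hik hjk.symm hij h
  obtain ⟨f1, f2, f3⟩ := hf (A i ∪ A j ∪ A k) (Set.union_right_comm _ _ _)
  refine ⟨a, ⟨ha, f1⟩, c, ⟨hc, f3⟩, b, ⟨hb, f2⟩, ?_⟩
  have : det2 (c - a) (b - a) = - det2 (b - a) (c - a) := by simp [det2]; ring
  linarith

/-- index of a body -/
def idx (n : Nat) : Fin 5 := Fin.ofNat 5 n

theorem idx_ne {a b : Nat} (ha : a < 5) (hb : b < 5) (h : a ≠ b) : idx a ≠ idx b := by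
  intro e
  have := congrArg Fin.val e
  simp only [idx, Fin.ofNat, Nat.mod_eq_of_lt ha, Nat.mod_eq_of_lt hb] at this
  exact h this

theorem forcedSys_of {X : Type*} [LinearOrder X] {L : X → Fin 5 → Fin 5 → Prop} (S : LSys L) :
    ForcedSys (fun i j k => ¬ AlX L (idx i) (idx k) (idx j)) where
  cyc i j k h h' := h (alX_cyc h')
  cons i j k hi hj hk h1 h2 h3 h h' := by
    rcases S.al_or (idx_ne hi hj h1) (idx_ne hj hk h2) (idx_ne hi hk h3) with g | g
    · exact h' g
    · exact h g
  r0 t s p q r ht hs hp hq hr hd f1 f2 f3 := by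
    simp only [List.nodup_cons, List.mem_cons, List.not_mem_nil, or_false, not_or, List.nodup_nil,
      not_false_eq_true, and_true] at hd
    obtain ⟨⟨h1, h2, h3, h4⟩, ⟨h5, h6, h7⟩, ⟨h8, h9⟩, h10⟩ := hd
    exact S.r4 (idx_ne hs hp h5) (idx_ne hs hq h6) (idx_ne hp hq h8)
      (idx_ne ht hs h1) (idx_ne ht hp h2) (idx_ne ht hq h3) f1 f2 f3
  r1 t s p q r ht hs hp hq hr hd f1 f2 f3 f4 f5 := by
    simp only [List.nodup_cons, List.mem_cons, List.not_mem_nil, or_false, not_or, List.nodup_nil,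
      not_false_eq_true, and_true] at hd
    obtain ⟨⟨h1, h2, h3, h4⟩, ⟨h5, h6, h7⟩, ⟨h8, h9⟩, h10⟩ := hd
    exact S.r5 (idx_ne ht hs h1) (idx_ne ht hp h2) (idx_ne ht hq h3) (idx_ne ht hr h4)
      (idx_ne hs hp h5) (idx_ne hs hq h6) (idx_ne hs hr h7) (idx_ne hp hq h8) (idx_ne hp hr h9)
      (idx_ne hq hr h10) f1 f2 f3 f4 f5
  r2 t s p q r ht hs hp hq hr hd f1 f2 f3 f4 f5 := by
    simp only [List.nodup_cons, List.mem_cons, List.not_mem_nil, or_false, not_or, List.nodup_nil,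
      not_false_eq_true, and_true] at hd
    obtain ⟨⟨h1, h2, h3, h4⟩, ⟨h5, h6, h7⟩, ⟨h8, h9⟩, h10⟩ := hd
    exact S.r5' (idx_ne ht hs h1) (idx_ne ht hp h2) (idx_ne ht hq h3) (idx_ne ht hr h4)
      (idx_ne hs hp h5) (idx_ne hs hq h6) (idx_ne hs hr h7) (idx_ne hp hq h8) (idx_ne hp hr h9)
      (idx_ne hq hr h10) f1 f2 f3 f4 f5

/-- the representing points -/
def repPt (code : Nat) (i : Fin 5) : Plane :=
  !₂[(cfgX (codePt code i.1) : ℝ), (cfgY (codePt code i.1) : ℝ)]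

theorem det2_repPt (code : Nat) (i j k : Fin 5) :
    det2 (repPt code j - repPt code i) (repPt code k - repPt code i) =
      (codeDet code i.1 j.1 k.1 : ℝ) := by
  simp [det2, repPt, codeDet]

theorem exists_tri : ∀ i j k : Fin 5, i < j → j < k →
    ∃ n < 10, triI n = i.1 ∧ triJ n = j.1 ∧ triK n = k.1 := by
  decide +kernel

theorem det2_sorted {x : Fin 5 → Plane}
    (h : ∀ i j k : Fin 5, i < j → j < k → det2 (x j - x i) (x k - x i) ≠ 0) (i j k : Fin 5)
    (hij : i ≠ j) (hjk : j ≠ k) (hik : i ≠ k) : det2 (x j - x i) (x k - x i) ≠ 0 := by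
  have c : ∀ a b c, det2 (x b - x a) (x c - x a) = det2 (x c - x b) (x a - x b) := by
    intro a b c; simp [det2]; ring
  have t : ∀ a b c, det2 (x b - x a) (x c - x a) = - det2 (x c - x a) (x b - x a) := by
    intro a b c; simp [det2]; ring
  rcases lt_or_gt_of_ne hij with h1 | h1 <;> rcases lt_or_gt_of_ne hjk with h2 | h2 <;>
    rcases lt_or_gt_of_ne hik with h3 | h3
  · exact h _ _ _ h1 h2
  · exact absurd (h1.trans h2) h3.asymm
  · rw [t]; exact neg_ne_zero.2 (h _ _ _ h3 h2)
  · rw [c, c]; exact h _ _ _ h3 h1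
  · rw [t, c, c]; exact neg_ne_zero.2 (h _ _ _ h1 h3)
  · rw [c]; exact h _ _ _ h2 h3
  · exact absurd (h2.trans h1) h3.asymm
  · rw [t, c]; exact neg_ne_zero.2 (h _ _ _ h2 h1)

end Assembly

/-- Every family of five noncrossing convex bodies in general position is
representable by points. -/
theorem five_bodies_representable (A : Fin 5 → Set Plane)
    (hinj : Function.Injective A)
    (hbody : ∀ i, ConvexBody2 (A i))
    (hnc : ∀ i j, i ≠ j → NoncrossingPair (A i) (A j))
    (hgen : GenPos (Set.range A))
    (htan : ∀ i j, i ≠ j → ¬ TangentBodies (A i) (A j))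
    (hline : NoTripleTangentLine (Set.range A)) :
    ∃ x : Fin 5 → Plane,
      (∀ i j k : Fin 5, i ≠ j → j ≠ k → i ≠ k → det2 (x j - x i) (x k - x i) ≠ 0) ∧
      ∀ i j k : Fin 5, i < j → j < k →
        (0 < det2 (x j - x i) (x k - x i) → CCWOriented (A i) (A j) (A k)) ∧
        (det2 (x j - x i) (x k - x i) < 0 → CWOriented (A i) (A j) (A k)) := by
  choose s hs using fun i => (hbody i).exists_supp
  obtain ⟨code, hcode⟩ := (forcedSys_of (ord_lsys hinj hbody hnc hgen hs)).exists_code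
  have key : ∀ i j k : Fin 5, i < j → j < k →
      (0 < codeDet code i.1 j.1 k.1 ∧ AlX (DirOrd s) i j k) ∨
      (codeDet code i.1 j.1 k.1 < 0 ∧ AlX (DirOrd s) i k j) := by
    intro i j k hij hjk
    obtain ⟨n, hn, e1, e2, e3⟩ := exists_tri i j k hij hjk
    have g := hcode n hn
    have hidx : ∀ a : Fin 5, idx a.1 = a := by decide
    simp only [Good, e1, e2, e3, hidx, not_not] at g
    exact g
  refine ⟨repPt code, det2_sorted fun i j k hij hjk => ?_, fun i j k hij hjk => ?_⟩
  · rw [det2_repPt]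
    rcases key i j k hij hjk with h | h
    · exact_mod_cast h.1.ne'
    · exact_mod_cast h.1.ne
  · rw [det2_repPt]
    rcases key i j k hij hjk with h | h
    · refine ⟨fun _ => ccw_of_al hinj hline hs hij.ne hjk.ne (hij.trans hjk).ne h.2, fun h' => ?_⟩
      have h' : codeDet code i.1 j.1 k.1 < 0 := by exact_mod_cast h'
      exact absurd h.1 h'.asymm
    · refine ⟨fun h' => ?_, fun _ => cw_of_al hinj hline hs hij.ne hjk.ne (hij.trans hjk).ne h.2⟩
      have h' : 0 < codeDet code i.1 j.1 k.1 := by exact_mod_cast h'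
      exact absurd h.1 h'.asymm
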